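/- arXiv:math/0603539 — 10 statements merged into one kernel-verified Lean document; each statement's English description precedes it below -/
import Mathlib

section
/- Let (X,d) be a geodesic metric space with property (◇) for a constant λ ≥ 1. Let x, y ∈ X be distinct points, set r := d(x,y), and let t ∈ (0,1) and 0 ≤ h < max{t, 1−t}·r. Then the set A := B(x, tr + h) ∩ B(y, (1−t)r + h) satisfies diam A ≤ 4λh. -/
/-!
Property (◇) gives `closedBall z ν ⊆ A ⊆ closedBall z' (lam * ν)`, so `diam A ≤ 2 * lam * ν` and it
suffices that `ν ≤ 2 * h`. The bound on `h` says that one of the two centres, say `y`, lies outside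
the ball around the other, hence outside `closedBall z ν`. Moving from `z` by `ν` along a geodesic
towards `y` therefore stays in `A` and shortens the distance to `y` by `ν`; comparing with
`dist x y` yields the bound (`radius_le_of_subset_inter`).
-/

/-- A constant-speed geodesic from `x` to `y`, parameterized on `[0,1]`. -/
def IsGeodesicSegment {X : Type*} [MetricSpace X] (c : ℝ → X) (x y : X) : Prop :=
  c 0 = x ∧ c 1 = y ∧
    ∀ s ∈ Set.Icc (0:ℝ) 1, ∀ t ∈ Set.Icc (0:ℝ) 1,
      dist (c s) (c t) = dist x y * |s - t|

/-- A metric space is geodesic if any two points are joined by a constant-speed geodesic. -/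
def IsGeodesicSpace (X : Type*) [MetricSpace X] : Prop :=
  ∀ x y : X, ∃ c : ℝ → X, IsGeodesicSegment c x y
/-- Property (◇) with constant `lam`: for any two closed balls with non-empty intersection
there are `z, z'` and `ν ≥ 0` with `B(z,ν) ⊆ B₁ ∩ B₂ ⊆ B(z', lam * ν)`. -/
def HasDiamondProperty (X : Type*) [MetricSpace X] (lam : ℝ) : Prop :=
  ∀ (x₁ x₂ : X) (r₁ r₂ : ℝ),
    (Metric.closedBall x₁ r₁ ∩ Metric.closedBall x₂ r₂).Nonempty →
    ∃ (z z' : X) (ν : ℝ), 0 ≤ ν ∧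
      Metric.closedBall z ν ⊆ Metric.closedBall x₁ r₁ ∩ Metric.closedBall x₂ r₂ ∧
      Metric.closedBall x₁ r₁ ∩ Metric.closedBall x₂ r₂ ⊆ Metric.closedBall z' (lam * ν)

/-- If `closedBall z ν` lies in both balls and the centre `y` is not in `closedBall x (a + h)`,
then `ν ≤ 2 * h`: the point `w` at distance `ν` from `z` on a geodesic towards `y` satisfies
`dist w y = dist z y - ν`, and the triangle inequality for `x, w, y` gives the bound. -/
lemma radius_le_of_subset_inter {X : Type*} [MetricSpace X] (hgeo : IsGeodesicSpace X)
    {x y z : X} {a b h ν : ℝ} (hν : 0 ≤ ν) (hab : a + b = dist x y) (hb : h < b)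
    (hx : Metric.closedBall z ν ⊆ Metric.closedBall x (a + h))
    (hy : Metric.closedBall z ν ⊆ Metric.closedBall y (b + h)) : ν ≤ 2 * h := by
  have hνlt : ν < dist z y := by
    by_contra! hle
    have hyx : y ∈ Metric.closedBall x (a + h) :=
      hx (by rw [Metric.mem_closedBall, dist_comm]; exact hle)
    rw [Metric.mem_closedBall, dist_comm] at hyx
    linarith
  have hpos : 0 < dist z y := hν.trans_lt hνlt
  obtain ⟨c, h0, h1, hc⟩ := hgeo z y
  have hs : ν / dist z y ∈ Set.Icc (0 : ℝ) 1 :=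
    ⟨by positivity, (div_le_one hpos).2 hνlt.le⟩
  have hwz : dist (c (ν / dist z y)) z = ν := by
    have := hc _ hs 0 (by simp)
    rw [h0, sub_zero, abs_of_nonneg hs.1, mul_div_cancel₀ _ hpos.ne'] at this
    exact this
  have hwy : dist (c (ν / dist z y)) y = dist z y - ν := by
    have := hc _ hs 1 (by simp)
    rw [h1, abs_sub_comm, abs_of_nonneg (sub_nonneg.2 hs.2), mul_sub, mul_one,
      mul_div_cancel₀ _ hpos.ne'] at this
    exact this
  have hwx := Metric.mem_closedBall.1 (hx (Metric.mem_closedBall.2 hwz.le))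
  have hzy := Metric.mem_closedBall.1 (hy (Metric.mem_closedBall_self hν))
  linarith [dist_triangle_left x y (c (ν / dist z y))]

theorem diam_ball_intersection_le {X : Type*} [MetricSpace X] (lam : ℝ) (hlam : 1 ≤ lam)
    (hgeo : IsGeodesicSpace X) (hdia : HasDiamondProperty X lam)
    (x y : X) (hxy : x ≠ y) (t h : ℝ) (ht : t ∈ Set.Ioo (0:ℝ) 1)
    (hh : 0 ≤ h) (hh' : h < max t (1 - t) * dist x y) :
    Metric.diam (Metric.closedBall x (t * dist x y + h) ∩
      Metric.closedBall y ((1 - t) * dist x y + h)) ≤ 4 * lam * h := by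
  rcases (Metric.closedBall x (t * dist x y + h) ∩
      Metric.closedBall y ((1 - t) * dist x y + h)).eq_empty_or_nonempty with hA | hA
  · rw [hA, Metric.diam_empty]
    positivity
  obtain ⟨z, z', ν, hν, hsub, hsup⟩ := hdia _ _ _ _ hA
  have hx := hsub.trans Set.inter_subset_left
  have hy := hsub.trans Set.inter_subset_right
  have hle : ν ≤ 2 * h := by
    rcases le_total t (1 - t) with hc | hc
    · rw [max_eq_right hc] at hh'
      exact radius_le_of_subset_inter hgeo hν (by ring) hh' hx hy
    · rw [max_eq_left hc] at hh'
      exact radius_le_of_subset_inter hgeo hν (by rw [dist_comm y x]; ring) hh' hy hx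
  calc _ ≤ Metric.diam (Metric.closedBall z' (lam * ν)) :=
        Metric.diam_mono hsup Metric.isBounded_closedBall
    _ ≤ 2 * (lam * ν) := Metric.diam_closedBall (by positivity)
    _ ≤ 2 * (lam * (2 * h)) := by gcongr
    _ = 4 * lam * h := by ring
end

section
/- Let (X,d) be a geodesic metric space with property (◇) for some constant λ ≥ 1. Then X is uniquely geodesic: if c₁, c₂ : [0,1] → X are constant-speed geodesics with c₁(0) = c₂(0) and c₁(1) = c₂(1), then c₁(t) = c₂(t) for all t ∈ [0,1]. -/
theorem uniquely_geodesic_of_diamond {X : Type*} [MetricSpace X] (lam : ℝ) (hlam : 1 ≤ lam)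
    (hgeo : IsGeodesicSpace X) (hdia : HasDiamondProperty X lam)
    (c₁ c₂ : ℝ → X) (x y : X)
    (h₁ : IsGeodesicSegment c₁ x y) (h₂ : IsGeodesicSegment c₂ x y) :
    ∀ t ∈ Set.Icc (0:ℝ) 1, c₁ t = c₂ t := by
  intro t ht
  obtain ⟨h₁0, h₁1, h₁d⟩ := h₁
  obtain ⟨h₂0, h₂1, h₂d⟩ := h₂
  have h0 : (0:ℝ) ∈ Set.Icc (0:ℝ) 1 := by simp
  have h1 : (1:ℝ) ∈ Set.Icc (0:ℝ) 1 := by simp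
  rcases eq_or_lt_of_le ht.2 with rfl | ht1
  · rw [h₁1, h₂1]
  have mem : ∀ c : ℝ → X, c 0 = x → c 1 = y →
      (∀ s ∈ Set.Icc (0:ℝ) 1, ∀ t ∈ Set.Icc (0:ℝ) 1, dist (c s) (c t) = dist x y * |s - t|) →
      c t ∈ Metric.closedBall x (t * dist x y) ∩ Metric.closedBall y ((1 - t) * dist x y) := by
    intro c hc0 hc1 hc
    have a := hc t ht 0 h0
    have b := hc t ht 1 h1
    rw [hc0, sub_zero, abs_of_nonneg ht.1] at a
    rw [hc1, abs_sub_comm, abs_of_nonneg (by linarith)] at b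
    exact ⟨by rw [Metric.mem_closedBall, a, mul_comm], by rw [Metric.mem_closedBall, b, mul_comm]⟩
  have m₁ := mem c₁ h₁0 h₁1 h₁d
  have m₂ := mem c₂ h₂0 h₂1 h₂d
  rcases eq_or_lt_of_le (dist_nonneg (x := x) (y := y)) with hD | hD
  · have e₁ := m₁.1
    have e₂ := m₂.1
    rw [← hD, mul_zero, Metric.mem_closedBall, dist_le_zero] at e₁ e₂
    rw [e₁, e₂]
  obtain ⟨z, z', ν, hν, hsub, hsup⟩ := hdia x y _ _ ⟨_, m₁⟩
  have hν0 : ν = 0 := by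
    by_contra hne
    have hνpos : 0 < ν := lt_of_le_of_ne hν (Ne.symm hne)
    obtain ⟨hzx, hzy⟩ := hsub (Metric.mem_closedBall_self hν)
    rw [Metric.mem_closedBall] at hzx hzy
    have htri := dist_triangle_left x y z
    have hDpos : 0 < (1 - t) * dist x y := mul_pos (by linarith) hD
    have hL : 0 < dist z y := by linarith
    obtain ⟨g, hg0, hg1, hg⟩ := hgeo z y
    -- `g s` is the point at distance `min (dist z y) ν` from `z` on the way to `y`
    set s := min 1 (ν / dist z y) with hs
    have hspos : 0 < s := lt_min one_pos (div_pos hνpos hL)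
    have hs1 : s ≤ 1 := min_le_left _ _
    have hsν : dist z y * s ≤ ν := by
      have : s ≤ ν / dist z y := min_le_right _ _
      rw [le_div_iff₀ hL] at this
      linarith
    have hsI : s ∈ Set.Icc (0:ℝ) 1 := ⟨hspos.le, hs1⟩
    have a := hg s hsI 0 h0
    have b := hg s hsI 1 h1
    rw [hg0, sub_zero, abs_of_pos hspos] at a
    rw [hg1, abs_sub_comm, abs_of_nonneg (by linarith)] at b
    have hw := (hsub (show g s ∈ Metric.closedBall z ν by rw [Metric.mem_closedBall, a]; exact hsν)).1
    rw [Metric.mem_closedBall] at hw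
    have htri' := dist_triangle_left x y (g s)
    have := mul_pos hL hspos
    linarith
  rw [hν0, mul_zero] at hsup
  have e₁ := hsup m₁
  have e₂ := hsup m₂
  rw [Metric.mem_closedBall, dist_le_zero] at e₁ e₂
  rw [e₁, e₂]
end

section
/- Let (X,d) be a geodesic metric space with property (◇) for a constant λ ≥ 1. Then for any points x, y, y' ∈ X and any constant-speed geodesics c, c' : [0,1] → X with c(0) = x = c'(0), c(1) = y and c'(1) = y', one has d(c(t), c'(t)) ≤ 4λ·d(y, y') for all t ∈ [0,1]. -/
/-- In a geodesic space, a ball `B(z, ν)` not reaching `y` contains a point closer to `y` than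
`z` by exactly `ν`. -/
lemma exists_mem_closedBall_dist_eq {X : Type*} [MetricSpace X] (hgeo : IsGeodesicSpace X)
    {z y : X} {ν : ℝ} (hν : 0 ≤ ν) (h : ν < dist z y) :
    ∃ w ∈ Metric.closedBall z ν, dist w y = dist z y - ν := by
  obtain ⟨g, g0, g1, hg⟩ := hgeo z y
  have hpos : 0 < dist z y := hν.trans_lt h
  have hs0 : 0 ≤ ν / dist z y := by positivity
  have hs1 : ν / dist z y ≤ 1 := (div_le_one hpos).2 h.le
  have hmul : dist z y * (ν / dist z y) = ν := mul_div_cancel₀ ν hpos.ne'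
  refine ⟨g (ν / dist z y), ?_, ?_⟩
  · have := hg _ ⟨hs0, hs1⟩ 0 (by simp)
    rw [g0, sub_zero, abs_of_nonneg hs0, hmul] at this
    exact this.le
  · have := hg _ ⟨hs0, hs1⟩ 1 (by simp)
    rw [g1, abs_sub_comm, abs_of_nonneg (sub_nonneg.2 hs1), mul_sub, mul_one, hmul] at this
    exact this

lemma IsGeodesicSegment.dist_left {X : Type*} [MetricSpace X] {c : ℝ → X} {x y : X}
    (hc : IsGeodesicSegment c x y) {t : ℝ} (ht : t ∈ Set.Icc (0:ℝ) 1) :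
    dist (c t) x = t * dist x y := by
  have := hc.2.2 t ht 0 (by simp)
  rwa [hc.1, sub_zero, abs_of_nonneg ht.1, mul_comm] at this

lemma IsGeodesicSegment.dist_right {X : Type*} [MetricSpace X] {c : ℝ → X} {x y : X}
    (hc : IsGeodesicSegment c x y) {t : ℝ} (ht : t ∈ Set.Icc (0:ℝ) 1) :
    dist (c t) y = (1 - t) * dist x y := by
  have := hc.2.2 t ht 1 (by simp)
  rwa [hc.2.1, abs_sub_comm, abs_of_nonneg (sub_nonneg.2 ht.2), mul_comm] at this

/-- The estimate when the second geodesic is the shorter one; the general case follows by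
symmetry. -/
lemma dist_le_of_dist_le {X : Type*} [MetricSpace X] {lam : ℝ} (hlam : 1 ≤ lam)
    (hgeo : IsGeodesicSpace X) (hdia : HasDiamondProperty X lam)
    {x y y' : X} {c c' : ℝ → X}
    (hc : IsGeodesicSegment c x y) (hc' : IsGeodesicSegment c' x y')
    (h : dist x y' ≤ dist x y) :
    ∀ t ∈ Set.Icc (0:ℝ) 1, dist (c t) (c' t) ≤ 4 * lam * dist y y' := by
  intro t ht
  have hD : 0 ≤ dist y y' := dist_nonneg
  have hlD : dist y y' ≤ lam * dist y y' := le_mul_of_one_le_left hD hlam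
  have hct := hc.dist_left ht
  have hct1 := hc.dist_right ht
  have hct' := hc'.dist_left ht
  have hct1' := hc'.dist_right ht
  have h1t : 0 ≤ 1 - t := sub_nonneg.2 ht.2
  have hm0 := mul_le_mul_of_nonneg_left h ht.1
  have hm1 := mul_le_mul_of_nonneg_left h h1t
  have hmem : c t ∈ Metric.closedBall x (t * dist x y) ∩
      Metric.closedBall y ((1 - t) * dist x y + dist y y') := by
    constructor <;> rw [Metric.mem_closedBall] <;> linarith
  have hmem' : c' t ∈ Metric.closedBall x (t * dist x y) ∩
      Metric.closedBall y ((1 - t) * dist x y + dist y y') := by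
    have := dist_triangle_right (c' t) y y'
    constructor <;> rw [Metric.mem_closedBall] <;> linarith
  obtain ⟨z, z', ν, hν, hin, hout⟩ := hdia _ _ _ _ ⟨_, hmem⟩
  rcases le_or_gt (dist z y) ν with hzy | hzy
  · -- Here `y ∈ B(x, tℓ)`, which forces `(1 - t)ℓ ≤ 0`.
    have hy : dist y x ≤ t * dist x y := (hin (Metric.mem_closedBall'.2 hzy)).1
    rw [dist_comm] at hy
    have h4 := dist_triangle4 (c t) y y' (c' t)
    rw [dist_comm y' (c' t)] at h4
    linarith
  · obtain ⟨w, hw, hwy⟩ := exists_mem_closedBall_dist_eq hgeo hν hzy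
    have hwx : dist w x ≤ t * dist x y := (hin hw).1
    have hz : dist z y ≤ (1 - t) * dist x y + dist y y' :=
      (hin (Metric.mem_closedBall_self hν)).2
    have hνD : ν ≤ dist y y' := by
      linarith [dist_triangle_left x y w]
    have e1 : dist (c t) z' ≤ lam * ν := hout hmem
    have e2 : dist (c' t) z' ≤ lam * ν := hout hmem'
    have e3 := dist_triangle_right (c t) (c' t) z'
    have e4 : lam * ν ≤ lam * dist y y' := by gcongr
    linarith

theorem geodesic_bicombing_of_diamond {X : Type*} [MetricSpace X] (lam : ℝ) (hlam : 1 ≤ lam)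
    (hgeo : IsGeodesicSpace X) (hdia : HasDiamondProperty X lam)
    (x y y' : X) (c c' : ℝ → X)
    (hc : IsGeodesicSegment c x y) (hc' : IsGeodesicSegment c' x y') :
    ∀ t ∈ Set.Icc (0:ℝ) 1, dist (c t) (c' t) ≤ 4 * lam * dist y y' := by
  rcases le_total (dist x y') (dist x y) with h | h
  · exact dist_le_of_dist_le hlam hgeo hdia hc hc' h
  · intro t ht
    rw [dist_comm (c t), dist_comm y]
    exact dist_le_of_dist_le hlam hgeo hdia hc' hc h t ht
end

section
/- Let (X,d) be a geodesic metric space with property (◇) for a constant λ ≥ 1, and let m ≥ 0 be an integer. Then every Lipschitz map φ : Sᵐ → X admits a Lipschitz extension φ̄ : B^{m+1} → X (i.e., φ̄ restricted to Sᵐ equals φ) with Lipschitz constant Lip(φ̄) ≤ (8λ + 12)·Lip(φ). In particular, X is Lipschitz m-connected for every m ≥ 0. -/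
/-- Geodesics with a common starting point diverge at most linearly in the distance of their end
points. -/
lemma dist_geodesic_le {X : Type*} [MetricSpace X] {lam : ℝ} (hlam : 1 ≤ lam)
    (hgeo : IsGeodesicSpace X) (hdia : HasDiamondProperty X lam) {p x y : X} {c c' : ℝ → X}
    (hc : IsGeodesicSegment c p x) (hc' : IsGeodesicSegment c' p y) {t : ℝ}
    (ht : t ∈ Set.Icc (0 : ℝ) 1) :
    dist (c t) (c' t) ≤ 4 * lam * dist x y := by
  obtain ⟨c0, c1, hc⟩ := hc
  obtain ⟨c0', c1', hc'⟩ := hc'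
  have h0 : (0 : ℝ) ∈ Set.Icc (0 : ℝ) 1 := by simp
  have h1 : (1 : ℝ) ∈ Set.Icc (0 : ℝ) 1 := by simp
  obtain ⟨ht0, ht1⟩ := ht
  have a0 : dist (c t) p = dist p x * t := by
    have := hc t ⟨ht0, ht1⟩ 0 h0
    rwa [c0, sub_zero, abs_of_nonneg ht0] at this
  have a1 : dist (c t) x = dist p x * (1 - t) := by
    have := hc t ⟨ht0, ht1⟩ 1 h1
    rwa [c1, abs_sub_comm, abs_of_nonneg (sub_nonneg.2 ht1)] at this
  have b0 : dist (c' t) p = dist p y * t := by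
    have := hc' t ⟨ht0, ht1⟩ 0 h0
    rwa [c0', sub_zero, abs_of_nonneg ht0] at this
  have b1 : dist (c' t) y = dist p y * (1 - t) := by
    have := hc' t ⟨ht0, ht1⟩ 1 h1
    rwa [c1', abs_sub_comm, abs_of_nonneg (sub_nonneg.2 ht1)] at this
  have hD : dist p y ≤ dist p x + dist x y := dist_triangle _ _ _
  have hε : 0 ≤ dist x y := dist_nonneg
  have hDt := mul_le_mul_of_nonneg_right hD ht0
  have hDt' := mul_le_mul_of_nonneg_right hD (sub_nonneg.2 ht1)
  have hyx : dist (c' t) x ≤ dist (c' t) y + dist x y := by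
    rw [dist_comm x y]; exact dist_triangle _ _ _
  have hεt : 0 ≤ dist x y * t := mul_nonneg hε ht0
  have hεt' : 0 ≤ dist x y * (1 - t) := mul_nonneg hε (sub_nonneg.2 ht1)
  have hle : dist x y ≤ lam * dist x y := le_mul_of_one_le_left hε hlam
  have m1 : c t ∈ Metric.closedBall p (t * (dist p x + dist x y)) ∩
      Metric.closedBall x ((1 - t) * dist p x + (2 - t) * dist x y) :=
    ⟨by rw [Metric.mem_closedBall]; linarith, by rw [Metric.mem_closedBall]; linarith⟩
  have m2 : c' t ∈ Metric.closedBall p (t * (dist p x + dist x y)) ∩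
      Metric.closedBall x ((1 - t) * dist p x + (2 - t) * dist x y) :=
    ⟨by rw [Metric.mem_closedBall]; linarith, by rw [Metric.mem_closedBall]; linarith⟩
  obtain ⟨z, z', ν, hν, hin, hout⟩ := hdia p x _ _ ⟨_, m1⟩
  rcases le_or_gt ν (dist z x) with hb | hb
  · have hν2 : ν ≤ 2 * dist x y := by
      obtain ⟨g, g0, g1, hg⟩ := hgeo z x
      have hs : ν / dist z x ∈ Set.Icc (0 : ℝ) 1 :=
        ⟨div_nonneg hν dist_nonneg, div_le_one_of_le₀ hb dist_nonneg⟩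
      have hmul : dist z x * (ν / dist z x) = ν := by
        rcases eq_or_ne (dist z x) 0 with h | h
        · have : ν = 0 := le_antisymm (h ▸ hb) hν
          simp [this]
        · field_simp
      have q0 := hg _ hs 0 h0
      have q1 := hg _ hs 1 h1
      rw [g0, sub_zero, abs_of_nonneg hs.1, hmul] at q0
      rw [g1, abs_sub_comm, abs_of_nonneg (sub_nonneg.2 hs.2), mul_sub, hmul] at q1
      have hq := (hin (Metric.mem_closedBall.2 q0.le)).1
      have hz := (hin (Metric.mem_closedBall_self hν)).2
      rw [Metric.mem_closedBall] at hq hz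
      have := dist_triangle_left p x (g (ν / dist z x))
      linarith
    have e1 := hout m1
    have e2 := hout m2
    rw [Metric.mem_closedBall] at e1 e2
    have := dist_triangle_right (c t) (c' t) z'
    have := mul_le_mul_of_nonneg_left hν2 (zero_le_one.trans hlam)
    linarith
  · -- Here `x` itself lies in the ball around `p`, so `(1 - t) D ≤ t ε` and going through `x` and
    -- `y` is short enough.
    have hx : x ∈ Metric.closedBall z ν := by
      rw [Metric.mem_closedBall, dist_comm]; exact hb.le
    have hx := (hin hx).1
    rw [Metric.mem_closedBall, dist_comm] at hx
    have := dist_triangle_right (c t) (c' t) x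
    linarith

/-- Outside the ball of radius `1/2` the radial projection to the unit sphere is 2-Lipschitz. -/
lemma dist_le_of_radial {E : Type*} [NormedAddCommGroup E] [InnerProductSpace ℝ E] {u v : E}
    (hu : ‖u‖ = 1) (hv : ‖v‖ = 1) {s t : ℝ} (hs : 1 / 2 ≤ s) (ht : 1 / 2 ≤ t) :
    dist u v ≤ 2 * dist (s • u) (t • v) := by
  rw [dist_eq_norm, dist_eq_norm]
  have e1 := norm_sub_sq_real u v
  have e2 := norm_sub_sq_real (s • u) (t • v)
  rw [hu, hv] at e1
  rw [norm_smul, norm_smul, hu, hv, real_inner_smul_left, real_inner_smul_right, Real.norm_eq_abs,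
    Real.norm_eq_abs, mul_one, mul_one, sq_abs, sq_abs] at e2
  refine (sq_le_sq₀ (by positivity) (by positivity)).1 ?_
  have hst : 1 / 4 ≤ s * t := by nlinarith
  have := mul_le_mul_of_nonneg_right hst (sq_nonneg ‖u - v‖)
  nlinarith [sq_nonneg (s - t)]

theorem lipschitz_extension_of_diamond {X : Type*} [MetricSpace X] (lam : ℝ) (hlam : 1 ≤ lam)
    (hgeo : IsGeodesicSpace X) (hdia : HasDiamondProperty X lam)
    (m : ℕ) (φ : Metric.sphere (0 : EuclideanSpace ℝ (Fin (m + 1))) 1 → X)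
    (K : NNReal) (hφ : LipschitzWith K φ) :
    ∃ φb : Metric.closedBall (0 : EuclideanSpace ℝ (Fin (m + 1))) 1 → X,
      (∀ u : Metric.sphere (0 : EuclideanSpace ℝ (Fin (m + 1))) 1,
        φb ⟨u.1, Metric.sphere_subset_closedBall u.2⟩ = φ u) ∧
      ∀ u v, dist (φb u) (φb v) ≤ (8 * lam + 12) * K * dist u v := by
  classical
  choose c hc using hgeo
  obtain ⟨u₀⟩ : Nonempty (Metric.sphere (0 : EuclideanSpace ℝ (Fin (m + 1))) 1) :=
    (NormedSpace.sphere_nonempty.2 zero_le_one).to_subtype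
  -- Polar coordinates on the ball; at the origin the direction `u₀` is an arbitrary choice.
  have hdir : ∀ w : EuclideanSpace ℝ (Fin (m + 1)),
      ∃ u : Metric.sphere (0 : EuclideanSpace ℝ (Fin (m + 1))) 1, w = ‖w‖ • u.1 := by
    intro w
    rcases eq_or_ne w 0 with h | h
    · exact ⟨u₀, by simp [h]⟩
    · have hw : ‖w‖ ≠ 0 := norm_ne_zero_iff.2 h
      refine ⟨⟨‖w‖⁻¹ • w, ?_⟩, ?_⟩
      · rw [mem_sphere_zero_iff_norm, norm_smul, norm_inv, norm_norm, inv_mul_cancel₀ hw]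
      · rw [smul_smul, mul_inv_cancel₀ hw, one_smul]
  choose dir hdir using hdir
  have hK : (0 : ℝ) ≤ K := K.2
  have hdiam : ∀ u, dist (φ u₀) (φ u) ≤ 2 * K := by
    intro u
    have h1 := hφ.dist_le_mul u₀ u
    have h2 : dist u₀ u ≤ 2 := by
      have := dist_triangle_right u₀.1 u.1 0
      rw [u₀.2, u.2] at this
      rw [Subtype.dist_eq]; linarith
    have := mul_le_mul_of_nonneg_left h2 hK
    linarith
  have hf : ∀ w : Metric.closedBall (0 : EuclideanSpace ℝ (Fin (m + 1))) 1,
      max 0 (2 * ‖w.1‖ - 1) ∈ Set.Icc (0 : ℝ) 1 := by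
    intro w
    have := mem_closedBall_zero_iff.1 w.2
    exact ⟨le_max_left _ _, max_le zero_le_one (by linarith)⟩
  refine ⟨fun w => c (φ u₀) (φ (dir w.1)) (max 0 (2 * ‖w.1‖ - 1)), ?_, ?_⟩
  · intro u
    have hu : ‖u.1‖ = 1 := mem_sphere_zero_iff_norm.1 u.2
    have hd : dir u.1 = u := by
      have := hdir u.1
      rw [hu, one_smul] at this
      exact Subtype.ext this.symm
    simp only [hd, hu]
    norm_num
    exact (hc _ _).2.1
  · -- By symmetry the second point may be taken closer to the origin.
    have key : ∀ u v : Metric.closedBall (0 : EuclideanSpace ℝ (Fin (m + 1))) 1,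
        dist (c (φ u₀) (φ (dir u.1)) (max 0 (2 * ‖u.1‖ - 1)))
          (c (φ u₀) (φ (dir v.1)) (max 0 (2 * ‖v.1‖ - 1))) ≤ (8 * lam + 12) * K * dist u v := by
      intro u v
      wlog hvu : ‖v.1‖ ≤ ‖u.1‖ generalizing u v
      · rw [dist_comm, dist_comm u v]
        exact this v u (le_of_not_ge hvu)
      have hduv : (0 : ℝ) ≤ K * dist u v := mul_nonneg hK dist_nonneg
      have hlK : 0 ≤ lam * (K * dist u v) := mul_nonneg (zero_le_one.trans hlam) hduv
      have hrad : dist (c (φ u₀) (φ (dir u.1)) (max 0 (2 * ‖u.1‖ - 1)))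
          (c (φ u₀) (φ (dir u.1)) (max 0 (2 * ‖v.1‖ - 1))) ≤ 4 * (K * dist u v) := by
        rw [(hc _ _).2.2 _ (hf u) _ (hf v)]
        have h1 : |max 0 (2 * ‖u.1‖ - 1) - max 0 (2 * ‖v.1‖ - 1)| ≤ 2 * dist u v := by
          have h2 := abs_max_sub_max_le_abs (2 * ‖u.1‖ - 1) (2 * ‖v.1‖ - 1) 0
          have h3 := abs_norm_sub_norm_le u.1 v.1
          rw [← dist_eq_norm, ← Subtype.dist_eq] at h3
          rw [max_comm 0, max_comm 0]
          have h4 : 2 * ‖u.1‖ - 1 - (2 * ‖v.1‖ - 1) = 2 * (‖u.1‖ - ‖v.1‖) := by ring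
          rw [h4, abs_mul, abs_two] at h2
          linarith
        have := mul_le_mul (hdiam (dir u.1)) h1 (abs_nonneg _) (by positivity)
        linarith
      have htan : dist (c (φ u₀) (φ (dir u.1)) (max 0 (2 * ‖v.1‖ - 1)))
          (c (φ u₀) (φ (dir v.1)) (max 0 (2 * ‖v.1‖ - 1))) ≤ 8 * lam * (K * dist u v) := by
        rcases le_total ‖v.1‖ (1 / 2) with h | h
        · rw [max_eq_left (by linarith), (hc _ _).1, (hc _ _).1, dist_self]
          linarith
        · have h1 := dist_geodesic_le hlam (fun x y => ⟨c x y, hc x y⟩) hdia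
            (hc (φ u₀) (φ (dir u.1))) (hc (φ u₀) (φ (dir v.1))) (hf v)
          have h2 := hφ.dist_le_mul (dir u.1) (dir v.1)
          have h3 := dist_le_of_radial (mem_sphere_zero_iff_norm.1 (dir u.1).2)
            (mem_sphere_zero_iff_norm.1 (dir v.1).2) (h.trans hvu) h
          rw [← hdir, ← hdir, ← Subtype.dist_eq, ← Subtype.dist_eq] at h3
          have h4 := mul_le_mul_of_nonneg_left h3 hK
          have h5 := mul_le_mul_of_nonneg_left (h2.trans h4) (zero_le_one.trans hlam)
          linarith
      have := dist_triangle (c (φ u₀) (φ (dir u.1)) (max 0 (2 * ‖u.1‖ - 1)))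
        (c (φ u₀) (φ (dir u.1)) (max 0 (2 * ‖v.1‖ - 1)))
        (c (φ u₀) (φ (dir v.1)) (max 0 (2 * ‖v.1‖ - 1)))
      linarith
    exact key
end

section
/- Let (X,d) be a geodesic metric space with property (◇) for a constant λ ≥ 1, let U ⊆ ℝ² be open, and let φ : U → X be Lipschitz. Then for almost every z ∈ U the metric directional derivative md φ_z(v) exists for every v ∈ ℝ² and is degenerate, i.e., there exists v ≠ 0 with md φ_z(v) = 0. -/
/-- The metric directional derivative of `φ` at `z` in direction `v` is the limit
`lim_{r → 0⁺} d(φ(z + r v), φ z) / r`; `HasMDDerivAt φ z v L` says it exists and equals `L`. -/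
def HasMDDerivAt {X : Type*} [MetricSpace X] {k : ℕ}
    (φ : EuclideanSpace ℝ (Fin k) → X) (z v : EuclideanSpace ℝ (Fin k)) (L : ℝ) : Prop :=
  Filter.Tendsto (fun r : ℝ => dist (φ (z + r • v)) (φ z) / r)
    (nhdsWithin 0 (Set.Ioi 0)) (nhds L)

open MeasureTheory Filter Topology Metric Set

/-! ### Metric differentiability of Lipschitz maps -/

section MetricDifferentiability

variable {E : Type*} [NormedAddCommGroup E] [NormedSpace ℝ E]

/-- The supremum over `i` of the absolute directional derivatives of `f i` at `z` along `v`.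
At points where some `f i` is not differentiable that index contributes `0`; for uniformly Lipschitz
`f` this is still a seminorm in `v` at every `z`. -/
noncomputable def mdSup (f : ℕ → E → ℝ) (z v : E) : ℝ := ⨆ i, |fderiv ℝ (f i) z v|

variable {f : ℕ → E → ℝ} {K : NNReal}

lemma abs_fderiv_le (hf : ∀ i, LipschitzWith K (f i)) (i : ℕ) (z v : E) :
    |fderiv ℝ (f i) z v| ≤ K * ‖v‖ :=
  (fderiv ℝ (f i) z).le_of_opNorm_le (norm_fderiv_le_of_lipschitz ℝ (hf i)) v

lemma mdSup_bdd (hf : ∀ i, LipschitzWith K (f i)) (z v : E) :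
    BddAbove (range fun i => |fderiv ℝ (f i) z v|) :=
  ⟨K * ‖v‖, by rintro _ ⟨i, rfl⟩; exact abs_fderiv_le hf i z v⟩

lemma abs_fderiv_le_mdSup (hf : ∀ i, LipschitzWith K (f i)) (i : ℕ) (z v : E) :
    |fderiv ℝ (f i) z v| ≤ mdSup f z v :=
  le_ciSup (mdSup_bdd hf z v) i

lemma mdSup_nonneg (z v : E) : 0 ≤ mdSup f z v :=
  Real.iSup_nonneg fun _ => abs_nonneg _

lemma mdSup_le (hf : ∀ i, LipschitzWith K (f i)) (z v : E) : mdSup f z v ≤ K * ‖v‖ :=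
  ciSup_le fun i => abs_fderiv_le hf i z v

lemma mdSup_add_le (hf : ∀ i, LipschitzWith K (f i)) (z v w : E) :
    mdSup f z (v + w) ≤ mdSup f z v + mdSup f z w :=
  ciSup_le fun i => by
    rw [map_add]
    exact (abs_add_le _ _).trans
      (add_le_add (abs_fderiv_le_mdSup hf i z v) (abs_fderiv_le_mdSup hf i z w))

lemma mdSup_smul (z v : E) (c : ℝ) : mdSup f z (c • v) = |c| * mdSup f z v := by
  simp only [mdSup, map_smul, smul_eq_mul, abs_mul]
  rw [Real.mul_iSup_of_nonneg (abs_nonneg c)]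

lemma mdSup_neg (z v : E) : mdSup f z (-v) = mdSup f z v := by
  simp [mdSup]

lemma mdSup_lipschitz (hf : ∀ i, LipschitzWith K (f i)) (z : E) :
    LipschitzWith K (mdSup f z) := by
  refine LipschitzWith.of_le_add_mul K fun v w => ?_
  have h := mdSup_add_le hf z w (v - w)
  rw [add_sub_cancel] at h
  rw [dist_eq_norm]
  linarith [mdSup_le hf z (v - w)]

lemma exists_lt_abs_fderiv (z v : E) {ε : ℝ} (hε : 0 < ε) :
    ∃ i, mdSup f z v - ε < |fderiv ℝ (f i) z v| :=
  exists_lt_of_lt_ciSup (by unfold mdSup; linarith)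

/-- Lower bound for the increments: a single index `i` whose derivative almost realises the supremum
already gives it. -/
lemma md_lower {z : E}
    (hz : ∀ i, DifferentiableAt ℝ (f i) z) (a b : E) {ε : ℝ} (hε : 0 < ε) :
    ∀ᶠ r in 𝓝[>] (0 : ℝ), ∃ i,
      r * (mdSup f z (b - a) - ε) ≤ |f i (z + r • b) - f i (z + r • a)| := by
  obtain ⟨i, hi⟩ := exists_lt_abs_fderiv (f := f) z (b - a) (half_pos hε)
  have key : ∀ c : E, HasDerivAt (fun r : ℝ => f i (z + r • c)) (fderiv ℝ (f i) z c) 0 := by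
    intro c
    have h1 : HasDerivAt (fun r : ℝ => z + r • c) c 0 := by
      simpa using ((hasDerivAt_id (0 : ℝ)).smul_const c).const_add z
    have h2 : HasFDerivAt (f i) (fderiv ℝ (f i) z) (z + (0 : ℝ) • c) := by
      simpa using (hz i).hasFDerivAt
    exact h2.comp_hasDerivAt 0 h1
  have hd := (key b).sub (key a)
  rw [← map_sub] at hd
  have h3 := (hd.tendsto_slope_zero_right).abs
  have h4 := h3.eventually (lt_mem_nhds (show mdSup f z (b - a) - ε <
    |fderiv ℝ (f i) z (b - a)| by linarith))
  filter_upwards [h4, self_mem_nhdsWithin] with r hr hr0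
  refine ⟨i, ?_⟩
  have hr0' : 0 < r := hr0
  simp only [zero_add, zero_smul, add_zero, sub_self, sub_zero, smul_eq_mul, abs_mul, abs_inv,
    abs_of_pos hr0', Pi.sub_apply] at hr
  rw [← div_eq_inv_mul, lt_div_iff₀ hr0'] at hr
  linarith

variable [MeasurableSpace E] [BorelSpace E]

lemma measurable_mdSup (v : E) : Measurable fun z => mdSup f z v :=
  Measurable.iSup fun i => (measurable_fderiv_apply_const ℝ (f i) v).abs

variable [FiniteDimensional ℝ E]
  (μ : Measure E) [μ.IsAddHaarMeasure]

/-- If `g` dominates the derivative of the Lipschitz function `f` along `v`, and the averages of `g`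
over the balls of radius `ρ` centred on the segment from `p` to `p + r • v` are at most `C`, then `f`
increases by at most `C * r` along that segment, up to the error `2 * K * ρ`.  The average of `f`
over a translated ball is differentiable in the translation parameter, because `f` is differentiable
almost everywhere, so the mean value inequality applies to it. -/
lemma abs_sub_le_of_average {f : E → ℝ} (hf : LipschitzWith K f) {g : E → ℝ}
    (hg : LocallyIntegrable g μ) {v p : E} (hfg : ∀ y, |fderiv ℝ f y v| ≤ g y)
    {ρ r C : ℝ} (hρ : 0 < ρ) (hr : 0 ≤ r)
    (hC : ∀ t ∈ Icc 0 r, ⨍ y in closedBall (p + t • v) ρ, g y ∂μ ≤ C) :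
    |f (p + r • v) - f p| ≤ 2 * K * ρ + C * r := by
  set ν := μ.restrict (closedBall (0 : E) ρ) with hν
  have : IsFiniteMeasure ν := ⟨by
    rw [hν, Measure.restrict_apply_univ]; exact measure_closedBall_lt_top⟩
  set m := μ.real (closedBall (0 : E) ρ) with hm
  have hm0 : 0 < m := by
    rw [hm, measureReal_def]
    exact ENNReal.toReal_pos (measure_closedBall_pos μ 0 hρ).ne' measure_closedBall_lt_top.ne
  have hcont : ∀ q : E, Continuous fun h => f (q + h) := fun q =>
    hf.continuous.comp (by fun_prop)
  have hint : ∀ q : E, Integrable (fun h => f (q + h)) ν := fun q =>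
    (hcont q).continuousOn.integrableOn_compact (isCompact_closedBall _ _)
  set F : ℝ → ℝ := fun t => ∫ h, f (p + t • v + h) ∂ν with hF
  have happ : ∀ q : E, |(∫ h, f (q + h) ∂ν) - m * f q| ≤ K * ρ * m := by
    intro q
    have h1 : m * f q = ∫ h, f q ∂ν := by
      simp [hν, hm, measureReal_def]
    rw [h1, ← integral_sub (hint q) (integrable_const _)]
    rw [← Real.norm_eq_abs]
    refine (norm_setIntegral_le_of_norm_le_const (μ := μ) (s := closedBall 0 ρ) (C := K * ρ)
      measure_closedBall_lt_top
      fun h hh => ?_)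
    have := hf.dist_le_mul (q + h) q
    rw [Real.dist_eq] at this
    rw [Real.norm_eq_abs]
    refine this.trans ?_
    have h2 : dist (q + h) q ≤ ρ := by simpa using hh
    gcongr
  have hdF : ∀ t, HasDerivAt F (∫ h, fderiv ℝ f (p + t • v + h) v ∂ν) t := by
    intro t
    refine (hasDerivAt_integral_of_dominated_loc_of_lip (s := univ)
      (F := fun t h => f (p + t • v + h)) (bound := fun _ => K * ‖v‖) univ_mem
      (Eventually.of_forall fun s => (hcont _).aestronglyMeasurable) (hint _) ?_ ?_
      (integrable_const _) ?_).2
    · exact ((measurable_fderiv_apply_const ℝ f v).comp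
        (measurable_const_add _)).aestronglyMeasurable
    · refine Eventually.of_forall fun h => LipschitzOnWith.of_dist_le_mul fun s _ s' _ => ?_
      refine (hf.dist_le_mul _ _).trans_eq ?_
      rw [dist_add_right, dist_add_left, dist_eq_norm, ← sub_smul, norm_smul, Real.coe_nnabs,
        abs_of_nonneg (by positivity), Real.dist_eq, Real.norm_eq_abs]
      ring
    · refine ae_restrict_of_ae ?_
      have h1 : ∀ᵐ y ∂μ, DifferentiableAt ℝ f y := hf.ae_differentiableAt
      have h2 := (measurePreserving_add_left μ (p + t • v)).quasiMeasurePreserving.ae h1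
      filter_upwards [h2] with h hh
      have h3 : HasDerivAt (fun s : ℝ => p + s • v + h) v t := by
        simpa using ((((hasDerivAt_id t).smul_const v).const_add p).add_const h)
      exact hh.hasFDerivAt.comp_hasDerivAt t h3
  have hbd : ∀ t ∈ Icc 0 r, ‖∫ h, fderiv ℝ f (p + t • v + h) v ∂ν‖ ≤ m * C := by
    intro t ht
    set q := p + t • v with hq
    have hpre : (fun h => q + h) ⁻¹' closedBall q ρ = closedBall 0 ρ := by
      ext h; simp
    have hmp := measurePreserving_add_left μ q
    have hemb := measurableEmbedding_addLeft q
    have hgi : Integrable (fun h => g (q + h)) ν := by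
      have h1 : IntegrableOn g (closedBall q ρ) μ :=
        hg.integrableOn_isCompact (isCompact_closedBall _ _)
      rw [← hmp.integrableOn_comp_preimage hemb, hpre] at h1
      exact h1
    have h2 : ∫ h, g (q + h) ∂ν = ∫ y in closedBall q ρ, g y ∂μ := by
      have := hmp.setIntegral_preimage_emb hemb g (closedBall q ρ)
      rwa [hpre] at this
    have h3 := hC t ht
    rw [setAverage_eq, Measure.addHaar_real_closedBall_center, ← hm, smul_eq_mul, ← h2,
      inv_mul_le_iff₀ hm0] at h3
    refine (norm_integral_le_of_norm_le hgi (Eventually.of_forall fun h => ?_)).trans h3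
    exact hfg _
  have hmv := norm_image_sub_le_of_norm_deriv_le_segment' (a := 0) (b := r)
    (fun t _ => (hdF t).hasDerivWithinAt) (fun t ht => hbd t ⟨ht.1, ht.2.le⟩) r ⟨hr, le_rfl⟩
  have e1 := abs_le.1 (happ (p + r • v))
  have e2 := abs_le.1 (happ p)
  have e3 : F 0 = ∫ h, f (p + h) ∂ν := by simp [hF]
  rw [e3, Real.norm_eq_abs, sub_zero] at hmv
  have e4 := abs_le.1 hmv
  simp only [hF] at e4
  have : m * |f (p + r • v) - f p| ≤ m * (2 * K * ρ + C * r) := by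
    rw [← abs_of_pos hm0, ← abs_mul, abs_of_pos hm0, abs_le]
    constructor <;> nlinarith [e1.1, e1.2, e2.1, e2.2, e4.1, e4.2]
  exact le_of_mul_le_mul_left this hm0

/-- Lebesgue differentiation, uniformly over balls of radius `η * r` centred on the segment from
`z + r • a` to `z + r • (a + v)`. -/
lemma ae_lebesgue {g : E → ℝ} (hg : LocallyIntegrable g μ) (v : E) :
    ∀ᵐ z ∂μ, ∀ a : E, ∀ η > 0, ∀ ε > 0, ∀ᶠ r in 𝓝[>] (0 : ℝ), ∀ t ∈ Icc 0 r,
      ⨍ y in closedBall (z + r • a + t • v) (η * r), g y ∂μ ≤ g z + ε := by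
  have h := ae_all_iff.2 fun n : ℕ =>
    IsUnifLocDoublingMeasure.ae_tendsto_average_norm_sub (μ := μ) hg (n : ℝ)
  filter_upwards [h] with z hz a η hη ε hε
  obtain ⟨n, hn⟩ := exists_nat_ge ((‖a‖ + ‖v‖) / η)
  rw [div_le_iff₀ hη] at hn
  -- Uniformity in `t = r * s` comes from the product filter with `s` ranging over all of `[0, 1]`;
  -- `n` bounds the distance from `z` to the centres relative to the radius.
  have h1 := hz n (l := 𝓝[>] (0 : ℝ) ×ˢ 𝓟 (Icc (0 : ℝ) 1))
    (fun q => z + q.1 • a + (q.1 * q.2) • v) (fun q => η * q.1) ?_ ?_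
  · have h2 := h1.eventually (gt_mem_nhds hε)
    rw [eventually_prod_principal_iff] at h2
    filter_upwards [h2, self_mem_nhdsWithin] with r hr hr0 t ht
    have hr0' : 0 < r := hr0
    have h3 := hr (t / r) ⟨div_nonneg ht.1 hr0'.le, (div_le_one hr0').2 ht.2⟩
    simp only [mul_div_cancel₀ t hr0'.ne'] at h3
    set B := closedBall (z + r • a + t • v) (η * r)
    have hgB : IntegrableOn g B μ := hg.integrableOn_isCompact (isCompact_closedBall _ _)
    have hm0 : 0 < μ.real B := 
      ENNReal.toReal_pos (measure_closedBall_pos μ _ (by positivity)).ne'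
        measure_closedBall_lt_top.ne
    have hfin : IsFiniteMeasure (μ.restrict B) := ⟨by
      rw [Measure.restrict_apply_univ]; exact measure_closedBall_lt_top⟩
    rw [setAverage_eq, smul_eq_mul, inv_mul_lt_iff₀ hm0] at h3
    rw [setAverage_eq, smul_eq_mul, inv_mul_le_iff₀ hm0]
    have hi : Integrable (fun y => g y - g z) (μ.restrict B) := hgB.sub (integrable_const _)
    have h4 : ∫ y in B, (g y - g z) ∂μ ≤ ∫ y in B, ‖g y - g z‖ ∂μ :=
      integral_mono hi hi.norm fun y => le_abs_self _
    rw [integral_sub hgB (integrable_const _), setIntegral_const, smul_eq_mul] at h4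
    linarith
  · have : Tendsto (fun r : ℝ => η * r) (𝓝[>] 0) (𝓝[>] 0) := by
      refine tendsto_nhdsWithin_iff.2 ⟨?_, ?_⟩
      · refine Tendsto.mono_left ?_ nhdsWithin_le_nhds
        exact Continuous.tendsto' (by fun_prop) _ _ (by simp)
      · filter_upwards [self_mem_nhdsWithin] with r hr
        exact mul_pos hη hr
    exact this.comp tendsto_fst
  · rw [eventually_prod_principal_iff]
    filter_upwards [self_mem_nhdsWithin] with r hr s hs
    have hr0 : 0 < r := hr
    rw [mem_closedBall, dist_eq_norm]
    have : z - (z + r • a + (r * s) • v) = - (r • (a + s • v)) := by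
      rw [smul_add, smul_smul]; abel
    rw [this, norm_neg, norm_smul, Real.norm_eq_abs, abs_of_pos hr0]
    have h5 : ‖a + s • v‖ ≤ ‖a‖ + ‖v‖ := by
      refine (norm_add_le _ _).trans ?_
      rw [norm_smul, Real.norm_eq_abs, abs_of_nonneg hs.1]
      nlinarith [norm_nonneg v, hs.2]
    nlinarith

lemma locallyIntegrable_mdSup (hf : ∀ i, LipschitzWith K (f i)) (v : E) :
    LocallyIntegrable (fun z => mdSup f z v) μ := by
  refine (locallyIntegrable_const (K * ‖v‖ : ℝ)).mono
    (measurable_mdSup v).aestronglyMeasurable (Eventually.of_forall fun z => ?_)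
  rw [Real.norm_eq_abs, Real.norm_eq_abs, abs_of_nonneg (mdSup_nonneg z v)]
  exact (mdSup_le hf z v).trans (le_abs_self _)

/-- Upper bound for the increments, uniform in `i`. -/
lemma ae_md_upper (hf : ∀ i, LipschitzWith K (f i)) :
    ∀ᵐ z ∂μ, ∀ a b : E, ∀ ε > 0, ∀ᶠ r in 𝓝[>] (0 : ℝ), ∀ i,
      |f i (z + r • b) - f i (z + r • a)| ≤ r * (mdSup f z (b - a) + ε) := by
  have h := ae_all_iff.2 fun n : ℕ => ae_lebesgue μ
    (locallyIntegrable_mdSup μ hf (TopologicalSpace.denseSeq E n))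
    (TopologicalSpace.denseSeq E n)
  filter_upwards [h] with z hz a b ε hε
  have hK : (0 : ℝ) < K + 1 := by positivity
  set η := ε / (8 * (K + 1)) with hη
  have hη0 : 0 < η := by positivity
  have hηK : K * η ≤ ε / 8 := by
    rw [hη, mul_div_assoc', div_le_div_iff₀ (by positivity) (by positivity)]
    nlinarith [K.coe_nonneg]
  obtain ⟨n, hn⟩ := (TopologicalSpace.denseRange_denseSeq E).exists_dist_lt (b - a) hη0
  set v := TopologicalSpace.denseSeq E n
  have hnv : mdSup f z v ≤ mdSup f z (b - a) + ε / 8 := by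
    have h1 := (mdSup_lipschitz hf z).dist_le_mul v (b - a)
    rw [Real.dist_eq, dist_comm] at h1
    have h2 := le_abs_self (mdSup f z v - mdSup f z (b - a))
    have h3 : K * dist (b - a) v ≤ K * η := by gcongr
    linarith
  filter_upwards [hz n a η hη0 (ε / 8) (by positivity), self_mem_nhdsWithin] with r hr hr0 i
  have hr0' : 0 < r := hr0
  have h1 := abs_sub_le_of_average μ (hf i) (locallyIntegrable_mdSup μ hf v)
    (fun y => abs_fderiv_le_mdSup hf i y v) (mul_pos hη0 hr0') hr0'.le hr
  have h2 := (hf i).dist_le_mul (z + r • b) (z + r • a + r • v)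
  have h3 : dist (z + r • b) (z + r • a + r • v) ≤ r * η := by
    rw [dist_eq_norm] at hn ⊢
    have : z + r • b - (z + r • a + r • v) = r • (b - a - v) := by
      rw [smul_sub, smul_sub]; abel
    rw [this, norm_smul, Real.norm_eq_abs, abs_of_pos hr0']
    gcongr
  have h4 := abs_sub_le (f i (z + r • b)) (f i (z + r • a + r • v)) (f i (z + r • a))
  rw [Real.dist_eq] at h2
  have h5 : K * dist (z + r • b) (z + r • a + r • v) ≤ K * (r * η) := by gcongr
  nlinarith

end MetricDifferentiability

/-! ### Property (◇) and degeneracy -/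

section Geometry

variable {X : Type*} [MetricSpace X]

/-- Two balls of radius `R < dist x₁ x₂` meet in a set of diameter at most
`2 * lam * (2 * R - dist x₁ x₂)`: moving from the centre of an inscribed ball of radius `ν` towards
`x₂` along a geodesic shows `ν ≤ 2 * R - dist x₁ x₂`. -/
lemma dist_le_of_diamond {lam : ℝ} (hlam : 1 ≤ lam) (hgeo : IsGeodesicSpace X)
    (hdia : HasDiamondProperty X lam) {x₁ x₂ m y : X} {R : ℝ}
    (hm₁ : dist m x₁ ≤ R) (hm₂ : dist m x₂ ≤ R) (hy₁ : dist y x₁ ≤ R) (hy₂ : dist y x₂ ≤ R)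
    (hR : R < dist x₁ x₂) :
    dist m y ≤ 2 * lam * (2 * R - dist x₁ x₂) := by
  obtain ⟨z, z', ν, hν, hsub, hsup⟩ := hdia x₁ x₂ R R ⟨m, hm₁, hm₂⟩
  have hz := hsub (mem_closedBall_self hν)
  have hx₂ : x₂ ∉ closedBall z ν := fun h => by
    have := (hsub h).1
    rw [mem_closedBall, dist_comm] at this
    linarith
  rw [mem_closedBall, not_le, dist_comm] at hx₂
  obtain ⟨c, hc0, hc1, hc⟩ := hgeo z x₂
  have hd : 0 < dist z x₂ := hν.trans_lt hx₂
  have hs0 : 0 ≤ ν / dist z x₂ := by positivity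
  have hs1 : ν / dist z x₂ ≤ 1 := (div_le_one hd).2 hx₂.le
  -- `p` is the point at distance `ν` from `z` on a geodesic towards `x₂`.
  set p := c (ν / dist z x₂)
  have hpz : dist p z = ν := by
    have := hc _ ⟨hs0, hs1⟩ 0 ⟨le_rfl, zero_le_one⟩
    rw [hc0, sub_zero, abs_of_nonneg hs0, mul_div_cancel₀ _ hd.ne'] at this
    exact this
  have hpx : dist p x₂ = dist z x₂ - ν := by
    have := hc _ ⟨hs0, hs1⟩ 1 ⟨zero_le_one, le_rfl⟩
    rw [hc1, abs_sub_comm, abs_of_nonneg (by linarith), mul_sub, mul_div_cancel₀ _ hd.ne',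
      mul_one] at this
    exact this
  have hp : dist p x₁ ≤ R := (hsub (mem_closedBall.2 hpz.le)).1
  have hzx : dist z x₂ ≤ R := hz.2
  have hν2 : ν ≤ 2 * R - dist x₁ x₂ := by
    have := dist_triangle x₁ p x₂
    rw [dist_comm x₁ p] at this
    linarith
  have h1 : dist m z' ≤ lam * ν := hsup ⟨hm₁, hm₂⟩
  have h2 : dist y z' ≤ lam * ν := hsup ⟨hy₁, hy₂⟩
  have h3 := dist_triangle_right m y z'
  nlinarith

/-- Distances in the image of a Lipschitz map `φ` on `U` are the suprema of the increments of
countably many globally defined real Lipschitz functions: extensions of the distance functions to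
a dense sequence. -/
lemma exists_coordinates {E : Type*} [MetricSpace E] [SecondCountableTopology E]
    {U : Set E} (hne : U.Nonempty) {φ : E → X} {K : NNReal} (hφ : LipschitzOnWith K φ U) :
    ∃ f : ℕ → E → ℝ, (∀ i, LipschitzWith K (f i)) ∧ ∀ x ∈ U, ∀ y ∈ U,
      (∀ i, |f i x - f i y| ≤ dist (φ x) (φ y)) ∧
      ∀ C, (∀ i, |f i x - f i y| ≤ C) → dist (φ x) (φ y) ≤ C := by
  have : Nonempty U := hne.to_subtype
  set u : ℕ → U := TopologicalSpace.denseSeq U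
  have h : ∀ i, ∃ g : E → ℝ, LipschitzWith K g ∧ EqOn (fun y => dist (φ y) (φ (u i))) g U := by
    intro i
    refine LipschitzOnWith.extend_real (LipschitzOnWith.of_dist_le_mul fun x hx y hy => ?_)
    exact (dist_dist_dist_le_left _ _ _).trans (hφ.dist_le_mul x hx y hy)
  choose f hf hfe using h
  refine ⟨f, hf, fun x hx y hy => ⟨fun i => ?_, fun C hC => ?_⟩⟩
  · rw [← hfe i hx, ← hfe i hy]
    exact abs_dist_sub_le _ _ _
  · refine le_of_forall_pos_le_add fun ε hε => ?_
    have hη : 0 < ε / (2 * (K + 1)) := by positivity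
    obtain ⟨i, hi⟩ := (TopologicalSpace.denseRange_denseSeq U).exists_dist_lt ⟨x, hx⟩ hη
    have h1 := hC i
    rw [← hfe i hx, ← hfe i hy] at h1
    have h2 : dist (φ x) (φ (u i)) ≤ ε / 2 := by
      refine (hφ.dist_le_mul x hx (u i) (u i).2).trans ?_
      have h3 : dist x (u i) ≤ ε / (2 * (K + 1)) := hi.le
      calc (K : ℝ) * dist x (u i) ≤ (K + 1) * (ε / (2 * (K + 1))) := by gcongr; linarith
        _ = ε / 2 := by field_simp
    have h4 := dist_triangle_right (φ x) (φ y) (φ (u i))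
    have h5 := (abs_le.1 h1).1
    linarith

/-- Kirchheim's metric differentiability theorem, in the form where both endpoints `z + r • a` and
`z + r • b` move. -/
lemma ae_metric_differentiable {E : Type*} [NormedAddCommGroup E] [NormedSpace ℝ E]
    [FiniteDimensional ℝ E] [MeasurableSpace E] [BorelSpace E]
    (μ : Measure E) [μ.IsAddHaarMeasure] {U : Set E} (hU : IsOpen U) {φ : E → X} {K : NNReal}
    (hφ : LipschitzOnWith K φ U) :
    ∀ᵐ z ∂(μ.restrict U), ∃ N : Seminorm ℝ E, LipschitzWith K N ∧ ∀ a b : E,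
      Tendsto (fun r : ℝ => dist (φ (z + r • b)) (φ (z + r • a)) / r) (𝓝[>] 0)
        (𝓝 (N (b - a))) := by
  rcases U.eq_empty_or_nonempty with rfl | hne
  · simp
  have : ProperSpace E := FiniteDimensional.proper ℝ E
  obtain ⟨f, hf, hfφ⟩ := exists_coordinates hne hφ
  have hdiff : ∀ᵐ z ∂μ, ∀ i, DifferentiableAt ℝ (f i) z :=
    ae_all_iff.2 fun i => (hf i).ae_differentiableAt
  filter_upwards [ae_restrict_mem hU.measurableSet, ae_restrict_of_ae hdiff,
    ae_restrict_of_ae (ae_md_upper μ hf)] with z hzU hzd hzu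
  refine ⟨Seminorm.of (mdSup f z) (mdSup_add_le hf z) fun c v => mdSup_smul z v c,
    mdSup_lipschitz hf z, fun a b => ?_⟩
  change Tendsto _ _ (𝓝 (mdSup f z (b - a)))
  have hmem : ∀ c : E, ∀ᶠ r in 𝓝[>] (0 : ℝ), z + r • c ∈ U := fun c => by
    have : Tendsto (fun r : ℝ => z + r • c) (𝓝[>] 0) (𝓝 z) :=
      (Continuous.tendsto' (by fun_prop) _ _ (by simp)).mono_left nhdsWithin_le_nhds
    exact this.eventually (hU.mem_nhds hzU)
  rw [Metric.tendsto_nhds]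
  intro ε hε
  filter_upwards [hmem a, hmem b, hzu a b (ε / 2) (half_pos hε),
    md_lower hzd a b (half_pos hε), self_mem_nhdsWithin] with r ha hb hup hlo hr
  have hr0 : 0 < r := hr
  obtain ⟨i, hi⟩ := hlo
  have h1 := (hfφ _ hb _ ha).2 _ hup
  have h2 := hi.trans ((hfφ _ hb _ ha).1 i)
  rw [mul_comm, ← le_div_iff₀ hr0] at h2
  rw [mul_comm, ← div_le_iff₀ hr0] at h1
  rw [Real.dist_eq, abs_lt]
  constructor <;> linarith

/-- A seminorm on the plane which is the blow-up at `z` of a map into a geodesic space with (◇) has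
a nontrivial kernel. -/
lemma not_norm_of_diamond {lam : ℝ} (hlam : 1 ≤ lam) (hgeo : IsGeodesicSpace X)
    (hdia : HasDiamondProperty X lam) {φ : EuclideanSpace ℝ (Fin 2) → X}
    {z : EuclideanSpace ℝ (Fin 2)} {K : NNReal} (N : Seminorm ℝ (EuclideanSpace ℝ (Fin 2)))
    (hN : LipschitzWith K N)
    (hmd : ∀ a b, Tendsto (fun r : ℝ => dist (φ (z + r • b)) (φ (z + r • a)) / r) (𝓝[>] 0)
        (𝓝 (N (b - a)))) :
    ∃ v ≠ 0, N v = 0 := by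
  by_contra! hpos
  have hpos' : ∀ v, v ≠ 0 → 0 < N v := fun v hv => (apply_nonneg N v).lt_of_ne' (hpos v hv)
  obtain ⟨v, hvd, hv0⟩ : ∃ v, DifferentiableAt ℝ N v ∧ v ≠ 0 :=
    ((hN.ae_differentiableAt (μ := volume)).and
      (Measure.ae_ne volume (0 : EuclideanSpace ℝ (Fin 2)))).exists
  obtain ⟨w, hw, hw0⟩ : ∃ w ∈ LinearMap.ker (fderiv ℝ N v).toLinearMap, w ≠ 0 :=
    (Submodule.ne_bot_iff _).1 (LinearMap.ker_ne_bot_of_finrank_lt (by simp))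
  have hw' : fderiv ℝ N v w = 0 := hw
  have hNv := hpos' v hv0
  have hNw := hpos' w hw0
  -- The estimates below give `N w ≤ ε * (1 + 10 * lam)`, which this choice of `ε` excludes.
  set ε := N w / (2 * (1 + 10 * lam)) with hε
  have hε0 : 0 < ε := by positivity
  have hεw : ε * (1 + 10 * lam) < N w := by
    rw [hε, div_mul_eq_mul_div, div_lt_iff₀ (by positivity)]
    nlinarith
  have hder : HasDerivAt (fun s : ℝ => N (v + s • w)) 0 0 := by
    have h1 : HasDerivAt (fun s : ℝ => v + s • w) w 0 := by
      simpa using ((hasDerivAt_id (0 : ℝ)).smul_const w).const_add v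
    have h2 : HasFDerivAt N (fderiv ℝ N v) (v + (0 : ℝ) • w) := by
      simpa using hvd.hasFDerivAt
    have h3 := h2.comp_hasDerivAt 0 h1
    rw [hw'] at h3
    exact h3
  have hlit := (hasDerivAt_iff_isLittleO.1 hder).def hε0
  obtain ⟨t₀, ht₀, hball⟩ := Metric.eventually_nhds_iff.1 hlit
  obtain ⟨t, ht, htt, htv⟩ : ∃ t : ℝ, 0 < t ∧ t < t₀ ∧ 3 * ε * t < N v := by
    refine ⟨min (t₀ / 2) (N v / (6 * ε)), by positivity, ?_, ?_⟩
    · exact (min_le_left _ _).trans_lt (by linarith)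
    · calc 3 * ε * min (t₀ / 2) (N v / (6 * ε)) ≤ 3 * ε * (N v / (6 * ε)) := by
            gcongr; exact min_le_right _ _
        _ = N v / 2 := by field_simp; norm_num
        _ < N v := by linarith
  have hplus : N (v + t • w) ≤ N v + ε * t := by
    have := hball (y := t) (by simpa [abs_of_pos ht] using htt)
    simp only [zero_smul, add_zero, sub_zero, smul_zero, Real.norm_eq_abs, abs_of_pos ht] at this
    linarith [(abs_le.1 this).2]
  have hminus : N (t • w - v) ≤ N v + ε * t := by
    have := hball (y := -t) (by simpa [abs_of_pos ht] using htt)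
    simp only [zero_smul, add_zero, sub_zero, smul_zero, Real.norm_eq_abs, abs_neg,
      abs_of_pos ht, neg_smul] at this
    rw [← sub_eq_add_neg, map_sub_rev] at this
    linarith [(abs_le.1 this).2]
  have hεt : 0 < ε * t := by positivity
  have up : ∀ a b L, N (b - a) ≤ L → ∀ᶠ r in 𝓝[>] (0 : ℝ),
      dist (φ (z + r • b)) (φ (z + r • a)) / r < L + ε * t := fun a b L hL =>
    (hmd a b).eventually (gt_mem_nhds (by linarith))
  have lo : ∀ a b, ∀ᶠ r in 𝓝[>] (0 : ℝ),
      N (b - a) - ε * t < dist (φ (z + r • b)) (φ (z + r • a)) / r := fun a b =>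
    (hmd a b).eventually (lt_mem_nhds (by linarith))
  have h2v : N (v - -v) = 2 * N v := by
    rw [sub_neg_eq_add, ← two_smul ℝ v, map_smul_eq_mul]; simp
  have htw : N (0 - t • w) = t * N w := by
    rw [zero_sub, map_neg_eq_map, map_smul_eq_mul, Real.norm_eq_abs, abs_of_pos ht]
  obtain ⟨r, ⟨⟨⟨⟨⟨⟨h1, h2⟩, h3⟩, h4⟩, h5⟩, h6⟩, hr⟩⟩ :=
    (((((((up v 0 (N v + ε * t) (by rw [zero_sub, map_neg_eq_map]; linarith)).and
      (up (-v) 0 (N v + ε * t) (by rw [zero_sub, neg_neg]; linarith))).and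
      (up v (t • w) (N v + ε * t) hminus)).and
      (up (-v) (t • w) (N v + ε * t) (by rwa [sub_neg_eq_add, add_comm]))).and
      (lo (-v) v)).and (lo (t • w) 0)).and
      (self_mem_nhdsWithin (a := (0 : ℝ)) (s := Ioi 0))).exists
  have hr0 : 0 < r := hr
  rw [h2v] at h5
  rw [htw] at h6
  rw [div_lt_iff₀ hr0] at h1 h2 h3 h4
  rw [lt_div_iff₀ hr0] at h5 h6
  -- The balls are centred at the images of `z ± r • v`; the two points common to them are the images
  -- of `z` and `z + r • t • w`.
  have hD := dist_le_of_diamond hlam hgeo hdia h1.le h2.le h3.le h4.le (by nlinarith)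
  have hfin : (t * N w - ε * t) * r < (10 * lam * (ε * t)) * r := by
    have : 2 * lam * (2 * ((N v + ε * t + ε * t) * r)
        - dist (φ (z + r • v)) (φ (z + r • -v))) ≤ 2 * lam * (5 * (ε * t) * r) := by
      gcongr
      linarith
    linarith
  have := lt_of_mul_lt_mul_right hfin hr0.le
  nlinarith

end Geometry

theorem md_degenerate_of_diamond {X : Type*} [MetricSpace X] (lam : ℝ) (hlam : 1 ≤ lam)
    (hgeo : IsGeodesicSpace X) (hdia : HasDiamondProperty X lam)
    (U : Set (EuclideanSpace ℝ (Fin 2))) (hU : IsOpen U)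
    (φ : EuclideanSpace ℝ (Fin 2) → X) (K : NNReal) (hφ : LipschitzOnWith K φ U) :
    ∀ᵐ z ∂(MeasureTheory.volume.restrict U),
      (∀ v, ∃ L, HasMDDerivAt φ z v L) ∧ ∃ v ≠ 0, HasMDDerivAt φ z v 0 := by
  filter_upwards [ae_metric_differentiable volume hU hφ] with z ⟨N, hN, hmd⟩
  have key : ∀ v, HasMDDerivAt φ z v (N v) := fun v => by
    simpa [HasMDDerivAt] using hmd 0 v
  obtain ⟨v, hv, hNv⟩ := not_norm_of_diamond hlam hgeo hdia N hN hmd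
  exact ⟨fun v => ⟨_, key v⟩, v, hv, hNv ▸ key v⟩
end

section
/- Let (X,d) be a metric space, U ⊆ ℝᵏ open, and φ : U → X a Lipschitz map. Then for almost every z ∈ U the metric directional derivative md φ_z(v) exists for every v ∈ ℝᵏ. Furthermore, there are compact sets K_i ⊆ U, i ∈ ℕ, such that the Lebesgue measure of U \ ∪ᵢ K_i is zero and such that for every i and every ε > 0 there exists r(K_i, ε) > 0 with |d(φ(z+v), φ(z+w)) − md φ_z(v−w)| ≤ ε|v−w| for all z ∈ K_i and all v, w ∈ ℝᵏ satisfying |v|, |w| ≤ r(K_i, ε) and z + w ∈ K_i. -/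
open Filter Topology MeasureTheory Set
open scoped NNReal ENNReal

namespace MetricDiff

/-! ### Metric derivatives of Lipschitz curves -/

/-- A Lipschitz curve in `ℓ^∞(ℕ)` has a one-sided metric derivative almost everywhere, namely
`m t = sup_n |γ_n' t|`: the lower bound is coordinatewise differentiability, and the upper bound
is `‖γ t - γ s‖ ≤ ∫_s^t m` together with the Lebesgue differentiation theorem. -/
lemma ae_exists_tendsto_curve {C : ℝ≥0} {γ : ℝ → lp (fun _ : ℕ => ℝ) ⊤}
    (hγ : LipschitzWith C γ) :
    ∀ᵐ t : ℝ, ∃ L, Tendsto (fun r : ℝ => dist (γ (t + r)) (γ t) / r) (𝓝[>] 0) (𝓝 L) := by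
  have hcoord : ∀ n, LipschitzWith C (fun t => γ t n) := fun n =>
    LipschitzWith.of_dist_le_mul fun s t => by
      refine le_trans ?_ (hγ.dist_le_mul s t)
      rw [dist_eq_norm, dist_eq_norm]
      exact lp.norm_apply_le_norm ENNReal.top_ne_zero (γ s - γ t) n
  have hle : ∀ n t, |deriv (fun t => γ t n) t| ≤ C := fun n t =>
    norm_deriv_le_of_lipschitz (hcoord n)
  set m : ℝ → ℝ := fun t => ⨆ n, |deriv (fun t => γ t n) t| with hm
  have hbdd : ∀ t, BddAbove (range fun n => |deriv (fun t => γ t n) t|) := fun t =>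
    ⟨C, by rintro _ ⟨n, rfl⟩; exact hle n t⟩
  have hm0 : ∀ t, 0 ≤ m t := fun t => Real.iSup_nonneg fun n => abs_nonneg _
  have hmC : ∀ t, m t ≤ C := fun t => ciSup_le fun n => hle n t
  have hmeas : Measurable m := Measurable.iSup fun n => (measurable_deriv _).abs
  have hloc : LocallyIntegrable m volume := by
    refine (locallyIntegrable_const (C : ℝ)).mono hmeas.aestronglyMeasurable
      (Eventually.of_forall fun t => ?_)
    rw [Real.norm_of_nonneg (hm0 t), Real.norm_of_nonneg C.coe_nonneg]
    exact hmC t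
  have hint : ∀ a b, IntervalIntegrable m volume a b := fun a b =>
    (hloc.integrableOn_isCompact isCompact_uIcc).intervalIntegrable
  have hupper : ∀ s t, s ≤ t → dist (γ t) (γ s) ≤ ∫ u in s..t, m u := by
    intro s t hst
    have h0 : 0 ≤ ∫ u in s..t, m u :=
      intervalIntegral.integral_nonneg hst fun u _ => hm0 u
    rw [dist_eq_norm]
    refine lp.norm_le_of_forall_le h0 fun n => ?_
    have hac : AbsolutelyContinuousOnInterval (fun t => γ t n) s t :=
      ((hcoord n).lipschitzOnWith).absolutelyContinuousOnInterval
    have heq : (γ t - γ s : lp (fun _ : ℕ => ℝ) ⊤) n = ∫ u in s..t, deriv (fun t => γ t n) u :=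
      hac.integral_deriv_eq_sub.symm
    rw [heq]
    exact intervalIntegral.norm_integral_le_of_norm_le hst
      (Eventually.of_forall fun u _ => le_ciSup (hbdd u) n) (hint s t)
  have hdiff : ∀ᵐ t : ℝ, ∀ n, DifferentiableAt ℝ (fun t => γ t n) t :=
    ae_all_iff.2 fun n => (hcoord n).ae_differentiableAt_real
  filter_upwards [hdiff, LocallyIntegrable.ae_hasDerivAt_integral hloc] with t ht hI
  refine ⟨m t, tendsto_order.2 ⟨fun a ha => ?_, fun a ha => ?_⟩⟩
  · obtain ⟨n, hn⟩ := exists_lt_of_lt_ciSup ha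
    have hd := ((ht n).hasDerivAt.tendsto_slope_zero_right).abs
    filter_upwards [hd.eventually (lt_mem_nhds hn), self_mem_nhdsWithin] with r hr hr0
    refine hr.trans_le ?_
    have hr0 : 0 < r := hr0
    rw [smul_eq_mul, abs_mul, abs_of_pos (inv_pos.2 hr0), inv_mul_eq_div, dist_eq_norm]
    gcongr
    exact lp.norm_apply_le_norm ENNReal.top_ne_zero (γ (t + r) - γ t) n
  · have hd := (hI 0).tendsto_slope_zero_right
    filter_upwards [hd.eventually (gt_mem_nhds ha), self_mem_nhdsWithin] with r hr hr0
    have hr0 : 0 < r := hr0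
    refine lt_of_le_of_lt ?_ hr
    rw [smul_eq_mul, inv_mul_eq_div, intervalIntegral.integral_interval_sub_left (hint _ _)
      (hint _ _)]
    gcongr
    exact hupper _ _ (by linarith)

/-! ### Difference quotients -/

variable {E Y : Type*} [NormedAddCommGroup E] [NormedSpace ℝ E] [MetricSpace Y]

/-- The metric difference quotient `d(Φ(z + r v), Φ z) / r`. -/
noncomputable def quot (Φ : E → Y) (v : E) (r : ℝ) (z : E) : ℝ :=
  dist (Φ (z + r • v)) (Φ z) / r

lemma abs_quot_sub_quot_le {K : ℝ≥0} {Φ : E → Y} (hΦ : LipschitzWith K Φ) (v w : E) {r : ℝ}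
    (hr : 0 < r) (z : E) : |quot Φ v r z - quot Φ w r z| ≤ K * ‖v - w‖ := by
  rw [quot, quot, ← sub_div, abs_div, abs_of_pos hr, div_le_iff₀ hr]
  refine (abs_dist_sub_le _ _ _).trans ((hΦ.dist_le_mul _ _).trans (le_of_eq ?_))
  rw [dist_eq_norm, add_sub_add_left_eq_sub, ← smul_sub, norm_smul, Real.norm_of_nonneg hr.le]
  ring

lemma abs_quot_sub_quot_le_of_le {K : ℝ≥0} {Φ : E → Y} (hΦ : LipschitzWith K Φ) (v : E) {r s : ℝ}
    (hr : 0 < r) (hrs : r ≤ s) (h : r⁻¹ ≤ s⁻¹ + 1) (z : E) :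
    |quot Φ v r z - quot Φ v s z| ≤ 2 * K * ‖v‖ * s := by
  have hs : 0 < s := hr.trans_le hrs
  set a := dist (Φ (z + r • v)) (Φ z) with ha
  set b := dist (Φ (z + s • v)) (Φ z) with hb
  have h1 : |a - b| ≤ K * ‖v‖ * (s - r) := by
    refine (abs_dist_sub_le _ _ _).trans ((hΦ.dist_le_mul _ _).trans (le_of_eq ?_))
    rw [dist_eq_norm, add_sub_add_left_eq_sub, ← sub_smul, norm_smul, Real.norm_eq_abs,
      abs_of_nonpos (by linarith)]
    ring
  have h2 : b ≤ K * ‖v‖ * s := by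
    refine (hΦ.dist_le_mul _ _).trans (le_of_eq ?_)
    rw [dist_eq_norm, add_sub_cancel_left, norm_smul, Real.norm_of_nonneg hs.le]
    ring
  have hb0 : 0 ≤ b := dist_nonneg
  have h3 : 0 ≤ r⁻¹ - s⁻¹ := sub_nonneg.2 (inv_anti₀ hr hrs)
  have hKv : 0 ≤ K * ‖v‖ := by positivity
  have h4 : s * (r⁻¹ - s⁻¹) ≤ s := by nlinarith
  have h5 : (s - r) * r⁻¹ = s * (r⁻¹ - s⁻¹) := by field_simp
  have key : quot Φ v r z - quot Φ v s z = (a - b) * r⁻¹ + b * (r⁻¹ - s⁻¹) := by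
    rw [quot, quot, ← ha, ← hb]; ring
  rw [key]
  calc |(a - b) * r⁻¹ + b * (r⁻¹ - s⁻¹)|
      ≤ |(a - b) * r⁻¹| + |b * (r⁻¹ - s⁻¹)| := abs_add_le _ _
    _ = |a - b| * r⁻¹ + b * (r⁻¹ - s⁻¹) := by
        rw [abs_mul, abs_mul, abs_of_nonneg h3, abs_of_nonneg hb0, abs_of_pos (inv_pos.2 hr)]
    _ ≤ K * ‖v‖ * (s - r) * r⁻¹ + K * ‖v‖ * s * (r⁻¹ - s⁻¹) := by gcongr
    _ = 2 * (K * ‖v‖) * (s * (r⁻¹ - s⁻¹)) := by rw [mul_assoc _ (s - r), h5]; ring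
    _ ≤ 2 * (K * ‖v‖) * s := by gcongr
    _ = 2 * K * ‖v‖ * s := by ring

/-- Convergence of the difference quotients along `r = 1 / (j + 1)`, uniformly on a set, implies
convergence as `r → 0⁺`, uniformly on the same set. -/
lemma tendstoUniformlyOn_of_seq {K : ℝ≥0} {Φ : E → Y} (hΦ : LipschitzWith K Φ) (v : E)
    {g : E → ℝ} {C : Set E}
    (h : TendstoUniformlyOn (fun (j : ℕ) z => quot Φ v (1 / ((j : ℝ) + 1)) z) g atTop C) :
    TendstoUniformlyOn (fun (r : ℝ) z => quot Φ v r z) g (𝓝[>] 0) C := by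
  rw [Metric.tendstoUniformlyOn_iff] at h ⊢
  intro ε hε
  -- the index `j` with `1 / (j + 2) < r ≤ 1 / (j + 1)`
  set J : ℝ → ℕ := fun r => ⌊r⁻¹⌋₊ - 1 with hJ
  have hJt : Tendsto J (𝓝[>] 0) atTop :=
    (tendsto_sub_atTop_nat 1).comp (tendsto_nat_floor_atTop.comp tendsto_inv_nhdsGT_zero)
  have hs : Tendsto (fun r => 2 * K * ‖v‖ * (1 / ((J r : ℝ) + 1))) (𝓝[>] 0) (𝓝 0) := by
    simpa using ((tendsto_one_div_add_atTop_nhds_zero_nat (𝕜 := ℝ)).comp hJt).const_mul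
      (2 * K * ‖v‖)
  filter_upwards [hJt.eventually (h (ε / 2) (half_pos hε)),
    hs.eventually (gt_mem_nhds (half_pos hε)), self_mem_nhdsWithin,
    nhdsWithin_le_nhds (gt_mem_nhds one_pos)] with r h1 h2 hr0 hr1 z hz
  have hr0 : 0 < r := hr0
  have hinv : 1 ≤ r⁻¹ := (one_le_inv₀ hr0).2 hr1.le
  have hfl : 1 ≤ ⌊r⁻¹⌋₊ := (Nat.one_le_floor_iff _).2 hinv
  have hJ1 : (J r : ℝ) + 1 = ⌊r⁻¹⌋₊ := by
    rw [hJ]; push_cast [Nat.cast_sub hfl]; ring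
  have hA := abs_quot_sub_quot_le_of_le hΦ v (r := r) (s := 1 / ((J r : ℝ) + 1)) hr0
    (by rw [hJ1, le_div_iff₀ (by exact_mod_cast hfl), ← le_inv_mul_iff₀ hr0, mul_one]
        exact Nat.floor_le (by positivity))
    (by rw [hJ1, one_div, inv_inv]; exact (Nat.lt_floor_add_one _).le) z
  have hB := h1 z hz
  rw [dist_comm, Real.dist_eq] at hB ⊢
  have := abs_sub_le (quot Φ v r z) (quot Φ v (1 / ((J r : ℝ) + 1)) z) (g z)
  linarith

lemma tendsto_of_seq {K : ℝ≥0} {Φ : E → Y} (hΦ : LipschitzWith K Φ) {v z : E} {L : ℝ}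
    (h : Tendsto (fun j : ℕ => quot Φ v (1 / ((j : ℝ) + 1)) z) atTop (𝓝 L)) :
    Tendsto (fun r : ℝ => quot Φ v r z) (𝓝[>] 0) (𝓝 L) :=
  tendstoUniformlyOn_singleton_iff_tendsto (f := fun _ => L).1
    (tendstoUniformlyOn_of_seq hΦ v (tendstoUniformlyOn_singleton_iff_tendsto.2 h))

lemma tendsto_seq_zero : Tendsto (fun j : ℕ => 1 / ((j : ℝ) + 1)) atTop (𝓝[>] 0) :=
  tendsto_nhdsWithin_iff.2 ⟨tendsto_one_div_add_atTop_nhds_zero_nat,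
    Eventually.of_forall fun j => by simp only [mem_Ioi]; positivity⟩

lemma continuous_quot {K : ℝ≥0} {Φ : E → Y} (hΦ : LipschitzWith K Φ) (v : E) (r : ℝ) :
    Continuous (quot Φ v r) := by
  have := hΦ.continuous
  unfold quot
  fun_prop

/-- The difference quotients are equi-Lipschitz in the direction, so a dense sequence of directions
with a metric derivative is enough for all directions to have one. -/
lemma exists_tendsto_of_dense {K : ℝ≥0} {Φ : E → Y} (hΦ : LipschitzWith K Φ) {D : ℕ → E}
    (hD : DenseRange D) {z : E}
    (h : ∀ n, ∃ L, Tendsto (fun r : ℝ => quot Φ (D n) r z) (𝓝[>] 0) (𝓝 L)) (v : E) :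
    ∃ L, Tendsto (fun r : ℝ => quot Φ v r z) (𝓝[>] 0) (𝓝 L) := by
  rw [← cauchy_map_iff_exists_tendsto, Metric.cauchy_iff]
  refine ⟨inferInstance, fun ε hε => ?_⟩
  obtain ⟨n, hn⟩ := hD.exists_dist_lt v (show 0 < ε / (4 * (K + 1)) by positivity)
  obtain ⟨L, hL⟩ := h n
  refine ⟨Metric.ball L (ε / 2), ?_, fun x hx y hy => ?_⟩
  · rw [mem_map]
    filter_upwards [hL.eventually (Metric.ball_mem_nhds L (show 0 < ε / 4 by positivity)),
      self_mem_nhdsWithin] with r hr hr0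
    have h1 := abs_quot_sub_quot_le hΦ v (D n) hr0 z
    rw [Real.dist_eq] at hr
    rw [mem_preimage, Metric.mem_ball, Real.dist_eq]
    rw [dist_eq_norm, lt_div_iff₀ (by positivity)] at hn
    have h2 := abs_sub_le (quot Φ v r z) (quot Φ (D n) r z) L
    nlinarith [norm_nonneg (v - D n)]
  · have := dist_triangle_right x y L
    rw [Metric.mem_ball] at hx hy
    linarith

/-! ### Almost everywhere existence -/

section ae

variable [FiniteDimensional ℝ E] [MeasurableSpace E] [BorelSpace E] (μ : Measure E)
  [μ.IsAddHaarMeasure]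

/-- For a fixed direction, Fubini reduces the existence of the metric derivative to the curves
`t ↦ Φ (y + t v)`. -/
lemma ae_exists_tendsto_direction {K : ℝ≥0} {Φ : E → lp (fun _ : ℕ => ℝ) ⊤}
    (hΦ : LipschitzWith K Φ) (v : E) :
    ∀ᵐ z ∂μ, ∃ L, Tendsto (fun j : ℕ => quot Φ v (1 / ((j : ℝ) + 1)) z) atTop (𝓝 L) := by
  have : ProperSpace E := FiniteDimensional.proper ℝ E
  let T : ℝ →L[ℝ] E := ContinuousLinearMap.toSpanSingleton ℝ v
  refine ae_mem_of_ae_add_linearMap_mem T.toLinearMap volume μ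
    (s := {z | ∃ L, Tendsto (fun j : ℕ => quot Φ v (1 / ((j : ℝ) + 1)) z) atTop (𝓝 L)})
    (measurableSet_exists_tendsto fun j => (continuous_quot hΦ v _).measurable) fun y => ?_
  have hcurve : LipschitzWith (K * (0 + ‖T‖₊)) fun t : ℝ => Φ (y + T t) :=
    hΦ.comp ((LipschitzWith.const y).add T.lipschitz)
  filter_upwards [ae_exists_tendsto_curve hcurve] with t ht
  obtain ⟨L, hL⟩ := ht
  refine ⟨L, (hL.comp tendsto_seq_zero).congr fun j => ?_⟩
  simp [quot, T, add_smul, add_assoc]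

/-! ### Uniformity on compact sets -/

/-- Egorov's theorem for countably many directions simultaneously. -/
lemma exists_compact_uniform {K : ℝ≥0} {Φ : E → lp (fun _ : ℕ => ℝ) ⊤}
    (hΦ : LipschitzWith K Φ) (D : ℕ → E) {A : Set E} (hA : MeasurableSet A) (hAμ : μ A ≠ ∞)
    {δ : ℝ≥0∞} (hδ : δ ≠ 0) :
    ∃ C ⊆ A, IsCompact C ∧ μ (A \ C) ≤ δ ∧ ∀ n, ∃ g : E → ℝ,
      TendstoUniformlyOn (fun (r : ℝ) z => quot Φ (D n) r z) g (𝓝[>] 0) C := by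
  have : ProperSpace E := FiniteDimensional.proper ℝ E
  obtain ⟨η, hδpos, hη⟩ := ENNReal.exists_pos_sum_of_countable (ENNReal.half_pos hδ).ne' ℕ
  have hex : ∀ n, ∃ g : E → ℝ, ∃ t ⊆ A, MeasurableSet t ∧ μ t ≤ η n ∧
      TendstoUniformlyOn (fun (j : ℕ) z => quot Φ (D n) (1 / ((j : ℝ) + 1)) z) g atTop
        (A \ t) := by
    intro n
    obtain ⟨g, hg, hlim⟩ := measurable_limit_of_tendsto_metrizable_ae
      (fun j => (continuous_quot hΦ (D n) _).aemeasurable)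
      (ae_exists_tendsto_direction μ hΦ (D n))
    obtain ⟨t, htA, ht, hμt, hu⟩ := tendstoUniformlyOn_of_ae_tendsto (μ := μ)
      (fun j : ℕ => (continuous_quot hΦ (D n) (1 / ((j : ℝ) + 1))).stronglyMeasurable)
      hg.stronglyMeasurable hA hAμ (hlim.mono fun x hx _ => hx)
      (ε := η n) (by exact_mod_cast hδpos n)
    exact ⟨g, t, htA, ht, by simpa using hμt, hu⟩
  choose g t htA ht hμt hu using hex
  have hS : MeasurableSet (A \ ⋃ n, t n) := hA.diff (MeasurableSet.iUnion ht)
  obtain ⟨C, hCS, hC, hμC⟩ := hS.exists_isCompact_sdiff_lt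
    (ne_top_of_le_ne_top hAμ (measure_mono sdiff_subset)) (ENNReal.half_pos hδ).ne'
  refine ⟨C, hCS.trans sdiff_subset, hC, ?_, fun n => ⟨g n, ?_⟩⟩
  · calc μ (A \ C) ≤ μ ((⋃ n, t n) ∪ ((A \ ⋃ n, t n) \ C)) := by
          refine measure_mono fun x hx => ?_
          by_cases h : x ∈ ⋃ n, t n
          · exact Or.inl h
          · exact Or.inr ⟨⟨hx.1, h⟩, hx.2⟩
      _ ≤ μ (⋃ n, t n) + μ ((A \ ⋃ n, t n) \ C) := measure_union_le _ _
      _ ≤ δ / 2 + δ / 2 := by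
          refine add_le_add ?_ hμC.le
          exact (measure_iUnion_le _).trans ((ENNReal.tsum_le_tsum hμt).trans hη.le)
      _ = δ := ENNReal.add_halves δ
  · exact tendstoUniformlyOn_of_seq hΦ _ ((hu n).mono fun x hx =>
      ⟨(hCS hx).1, fun h => (hCS hx).2 (mem_iUnion_of_mem n h)⟩)

end ae

/-- If the difference quotients in a dense sequence of directions converge uniformly on a compact
set, their limits are uniformly continuous there; a finite net of directions in the unit ball then
gives the two-point estimate with uniform radius. -/
lemma exists_radius [FiniteDimensional ℝ E] {K : ℝ≥0} {Φ : E → Y} (hΦ : LipschitzWith K Φ)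
    {D : ℕ → E} (hD : DenseRange D) {C : Set E} (hC : IsCompact C)
    (h : ∀ n, ∃ g : E → ℝ,
      TendstoUniformlyOn (fun (r : ℝ) z => quot Φ (D n) r z) g (𝓝[>] 0) C)
    {ε : ℝ} (hε : 0 < ε) :
    ∃ r > (0 : ℝ), ∀ z ∈ C, ∀ v w : E, ‖v‖ ≤ r → ‖w‖ ≤ r → z + w ∈ C →
      ∀ L, Tendsto (fun s : ℝ => quot Φ (v - w) s z) (𝓝[>] 0) (𝓝 L) →
        |dist (Φ (z + v)) (Φ (z + w)) - L| ≤ ε * ‖v - w‖ := by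
  have : ProperSpace E := FiniteDimensional.proper ℝ E
  choose g hg using h
  have hcont : ∀ n, ContinuousOn (g n) C := fun n =>
    (hg n).continuousOn (Eventually.of_forall fun r =>
      (continuous_quot hΦ _ _).continuousOn).frequently
  set δ : ℝ := ε / (4 * (K + 1)) with hδ
  have hδ0 : 0 < δ := by positivity
  have hKδ : K * δ ≤ ε / 4 := by
    rw [hδ, mul_div_assoc', div_le_div_iff₀ (by positivity) (by positivity)]
    nlinarith
  have hη : 0 < ε / 4 := by positivity
  obtain ⟨F, hF⟩ := (isCompact_closedBall (0 : E) 1).elim_finite_subcover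
    (fun n => Metric.ball (D n) δ) (fun n => Metric.isOpen_ball) fun x _ => by
      obtain ⟨n, hn⟩ := hD.exists_dist_lt x hδ0
      exact mem_iUnion_of_mem n hn
  have hev : ∀ᶠ ρ in 𝓝[>] (0 : ℝ), ∀ n ∈ F,
      (∀ s, 0 < s → s ≤ 2 * ρ → ∀ z ∈ C, |quot Φ (D n) s z - g n z| ≤ ε / 4) ∧
      (∀ z ∈ C, ∀ y ∈ C, ‖y - z‖ ≤ ρ → |g n y - g n z| ≤ ε / 4) := by
    refine (Finset.eventually_all F).2 fun n _ => ?_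
    have h1 := Metric.tendstoUniformlyOn_iff.1 (hg n) (ε / 4) hη
    obtain ⟨a, ha0, ha⟩ := mem_nhdsGT_iff_exists_Ioo_subset.1 h1
    obtain ⟨b, hb0, hb⟩ := Metric.uniformContinuousOn_iff.1
      (hC.uniformContinuousOn_of_continuous (hcont n)) (ε / 4) hη
    have ha0 : 0 < a := ha0
    filter_upwards [Ioo_mem_nhdsGT (show 0 < min (a / 2) b by positivity)] with ρ hρ
    have hρa : ρ < a / 2 := hρ.2.trans_le (min_le_left _ _)
    have hρb : ρ < b := hρ.2.trans_le (min_le_right _ _)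
    refine ⟨fun s hs0 hs z hz => ?_, fun z hz y hy hyz => ?_⟩
    · have := ha (show s ∈ Ioo 0 a from ⟨hs0, by linarith⟩) z hz
      rw [dist_comm, Real.dist_eq] at this
      exact this.le
    · have := hb y hy z hz (by rw [dist_eq_norm]; linarith)
      rw [Real.dist_eq] at this
      exact this.le
  obtain ⟨ρ, hρ, hρ0⟩ := (hev.and self_mem_nhdsWithin).exists
  refine ⟨ρ, hρ0, fun z hz v w hv hw hzw L hL => ?_⟩
  rcases eq_or_ne v w with rfl | hvw
  · have : L = 0 := by
      refine tendsto_nhds_unique hL ?_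
      simp [quot]
    simp [this]
  set u := v - w with hu
  have hT : 0 < ‖u‖ := norm_pos_iff.2 (sub_ne_zero.2 hvw)
  set e := ‖u‖⁻¹ • u with he
  have he1 : ‖e‖ = 1 := by rw [he, norm_smul, norm_inv, norm_norm, inv_mul_cancel₀ hT.ne']
  have hue : ‖u‖ • e = u := by rw [he, smul_smul, mul_inv_cancel₀ hT.ne', one_smul]
  obtain ⟨n, hnF, hn⟩ : ∃ n ∈ F, e ∈ Metric.ball (D n) δ := by
    have := hF (show e ∈ Metric.closedBall (0 : E) 1 by simp [he1])
    simpa using this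
  have hn' : ‖e - D n‖ ≤ δ := by rw [← dist_eq_norm]; exact hn.le
  have hT2 : ‖u‖ ≤ 2 * ρ := (norm_sub_le v w).trans (by linarith)
  obtain ⟨hA, hB⟩ := hρ n hnF
  -- the metric derivative at `z` in direction `e` is `L / ‖u‖`
  have hLe : Tendsto (fun s : ℝ => quot Φ e s z) (𝓝[>] 0) (𝓝 (L / ‖u‖)) := by
    have hscale : Tendsto (fun s : ℝ => s * ‖u‖⁻¹) (𝓝[>] 0) (𝓝[>] 0) := by
      refine tendsto_nhdsWithin_iff.2 ⟨?_, ?_⟩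
      · exact (by simpa using (tendsto_id (x := 𝓝 (0 : ℝ))).mul_const (‖u‖⁻¹) :
          Tendsto (fun s : ℝ => s * ‖u‖⁻¹) (𝓝 0) (𝓝 0)).mono_left nhdsWithin_le_nhds
      · filter_upwards [self_mem_nhdsWithin] with s hs
        exact mul_pos hs (inv_pos.2 hT)
    refine ((hL.comp hscale).div_const ‖u‖).congr fun s => ?_
    simp only [Function.comp, quot, he, smul_smul]
    field_simp
  have hLg : |L / ‖u‖ - g n z| ≤ K * δ := by
    have hlim := (hLe.sub ((hg n).tendsto_at hz)).abs
    refine le_of_tendsto hlim ?_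
    filter_upwards [self_mem_nhdsWithin] with s hs
    exact (abs_quot_sub_quot_le hΦ e (D n) hs z).trans (by gcongr)
  have h1 : |quot Φ e ‖u‖ (z + w) - quot Φ (D n) ‖u‖ (z + w)| ≤ K * δ :=
    (abs_quot_sub_quot_le hΦ e (D n) hT _).trans (by gcongr)
  have h2 := hA ‖u‖ hT hT2 (z + w) hzw
  have h3 := hB z hz (z + w) hzw (by simpa using hw)
  have hq : quot Φ e ‖u‖ (z + w) = dist (Φ (z + v)) (Φ (z + w)) / ‖u‖ := by
    rw [quot, hue, hu]; congr 3; abel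
  have htot : |dist (Φ (z + v)) (Φ (z + w)) / ‖u‖ - L / ‖u‖| ≤ ε := by
    rw [← hq]
    rw [abs_le] at *
    constructor <;> linarith [h1.1, h1.2, h2.1, h2.2, h3.1, h3.2, hLg.1, hLg.2]
  rwa [← sub_div, abs_div, abs_of_pos hT, div_le_iff₀ hT] at htot

/-! ### Reduction to a globally defined map into `ℓ^∞` -/

/-- The image of `U` is separable, hence embeds isometrically into `ℓ^∞(ℕ)`, and Lipschitz maps
into `ℓ^∞` extend with the same constant. -/
lemma exists_extension {α X : Type*} [MetricSpace α] [SecondCountableTopology α] [MetricSpace X]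
    {U : Set α} {φ : α → X} {K : ℝ≥0} (hφ : LipschitzOnWith K φ U) :
    ∃ Φ : α → lp (fun _ : ℕ => ℝ) ⊤, LipschitzWith K Φ ∧
      ∀ x ∈ U, ∀ y ∈ U, dist (Φ x) (Φ y) = dist (φ x) (φ y) := by
  classical
  have hsep : TopologicalSpace.SeparableSpace (φ '' U) := by
    rw [image_eq_range]
    exact (TopologicalSpace.isSeparable_range
      (continuousOn_iff_continuous_domRestrict.1 hφ.continuousOn)).separableSpace
  let ι := kuratowskiEmbedding (φ '' U)
  have hι : Isometry ι := kuratowskiEmbedding.isometry _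
  let f : α → lp (fun _ : ℕ => ℝ) ⊤ := fun x =>
    if hx : x ∈ U then ι ⟨φ x, mem_image_of_mem φ hx⟩ else 0
  have hf : ∀ x ∈ U, ∀ y ∈ U, dist (f x) (f y) = dist (φ x) (φ y) := by
    intro x hx y hy
    simp only [f, dif_pos hx, dif_pos hy]
    exact hι.dist_eq _ _
  have hfl : LipschitzOnWith K f U := LipschitzOnWith.of_dist_le_mul fun x hx y hy => by
    rw [hf x hx y hy]; exact hφ.dist_le_mul x hx y hy
  obtain ⟨Φ, hΦ, heq⟩ := hfl.extend_lp_infty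
  exact ⟨Φ, hΦ, fun x hx y hy => by rw [← heq hx, ← heq hy, hf x hx y hy]⟩

lemma hasMDDerivAt_iff {X : Type*} [MetricSpace X] {k : ℕ} {U : Set (EuclideanSpace ℝ (Fin k))}
    (hU : IsOpen U) {φ : EuclideanSpace ℝ (Fin k) → X} {Φ : EuclideanSpace ℝ (Fin k) → Y}
    (hd : ∀ x ∈ U, ∀ y ∈ U, dist (Φ x) (Φ y) = dist (φ x) (φ y))
    {z : EuclideanSpace ℝ (Fin k)} (hz : z ∈ U) (v : EuclideanSpace ℝ (Fin k)) (L : ℝ) :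
    HasMDDerivAt φ z v L ↔ Tendsto (fun r : ℝ => quot Φ v r z) (𝓝[>] 0) (𝓝 L) := by
  refine tendsto_congr' ?_
  have hc : Tendsto (fun r : ℝ => z + r • v) (𝓝[>] 0) (𝓝 z) := by
    have : Continuous fun r : ℝ => z + r • v := by fun_prop
    simpa using (this.tendsto 0).mono_left nhdsWithin_le_nhds
  filter_upwards [hc (hU.mem_nhds hz)] with r hr
  rw [quot, hd _ hr _ hz]

end MetricDiff

open MetricDiff
theorem metric_differentiability {X : Type*} [MetricSpace X] (k : ℕ)
    (U : Set (EuclideanSpace ℝ (Fin k))) (hU : IsOpen U)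
    (φ : EuclideanSpace ℝ (Fin k) → X) (K : NNReal) (hφ : LipschitzOnWith K φ U) :
    (∀ᵐ z ∂(MeasureTheory.volume.restrict U), ∀ v, ∃ L, HasMDDerivAt φ z v L) ∧
    ∃ Ks : ℕ → Set (EuclideanSpace ℝ (Fin k)),
      (∀ i, IsCompact (Ks i)) ∧ (∀ i, Ks i ⊆ U) ∧
      MeasureTheory.volume (U \ ⋃ i, Ks i) = 0 ∧
      ∀ i, ∀ ε > (0:ℝ), ∃ r > (0:ℝ),
        ∀ z ∈ Ks i, ∀ v w : EuclideanSpace ℝ (Fin k),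
          ‖v‖ ≤ r → ‖w‖ ≤ r → z + v ∈ U → z + w ∈ Ks i →
          ∀ L, HasMDDerivAt φ z (v - w) L →
            |dist (φ (z + v)) (φ (z + w)) - L| ≤ ε * ‖v - w‖ := by
  obtain ⟨Φ, hΦ, hd⟩ := exists_extension hφ
  set D := TopologicalSpace.denseSeq (EuclideanSpace ℝ (Fin k))
  have hD : DenseRange D := TopologicalSpace.denseRange_denseSeq _
  constructor
  · have hae : ∀ᵐ z : EuclideanSpace ℝ (Fin k), ∀ n, ∃ L,
        Tendsto (fun j : ℕ => quot Φ (D n) (1 / ((j : ℝ) + 1)) z) atTop (𝓝 L) :=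
      ae_all_iff.2 fun n => ae_exists_tendsto_direction volume hΦ (D n)
    filter_upwards [ae_restrict_of_ae hae, ae_restrict_mem hU.measurableSet] with z hz hzU v
    obtain ⟨L, hL⟩ := exists_tendsto_of_dense hΦ hD
      (fun n => (hz n).imp fun L hL => tendsto_of_seq hΦ hL) v
    exact ⟨L, (hasMDDerivAt_iff hU hd hzU v L).2 hL⟩
  · set A : ℕ → Set (EuclideanSpace ℝ (Fin k)) := fun i => U ∩ Metric.ball 0 i with hA
    have hex : ∀ i : ℕ, ∃ C ⊆ A i, IsCompact C ∧ volume (A i \ C) ≤ ((i : ℝ≥0∞) + 1)⁻¹ ∧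
        ∀ n, ∃ g : EuclideanSpace ℝ (Fin k) → ℝ,
          TendstoUniformlyOn (fun (r : ℝ) z => quot Φ (D n) r z) g (𝓝[>] 0) C := fun i =>
      exists_compact_uniform volume hΦ D (hU.measurableSet.inter measurableSet_ball)
        (ne_top_of_le_ne_top measure_ball_lt_top.ne (measure_mono inter_subset_right))
        (by simp)
    choose Ks hKA hKc hKμ hKu using hex
    refine ⟨Ks, hKc, fun i => (hKA i).trans inter_subset_left, ?_, fun i ε hε => ?_⟩
    · have hcover : U \ ⋃ i, Ks i ⊆ ⋃ M, A M \ ⋃ i, Ks i := by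
        rintro x ⟨hxU, hx⟩
        obtain ⟨M, hM⟩ := exists_nat_gt ‖x‖
        exact mem_iUnion.2 ⟨M, ⟨hxU, by simpa using hM⟩, hx⟩
      refine measure_mono_null hcover (measure_iUnion_null fun M => ?_)
      -- for every `i ≥ M` the set `A M \ ⋃ Ks` lies in `A i \ Ks i`, whose measure tends to zero
      have hlim : Tendsto (fun i : ℕ => ((i : ℝ≥0∞) + 1)⁻¹) atTop (𝓝 0) := by
        have := (tendsto_add_atTop_iff_nat 1).2 ENNReal.tendsto_inv_nat_nhds_zero
        simpa using this
      refine le_antisymm (ge_of_tendsto hlim ?_) zero_le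
      filter_upwards [eventually_ge_atTop M] with i hi
      refine (measure_mono ?_).trans (hKμ i)
      rintro x ⟨hxA, hx⟩
      exact ⟨⟨hxA.1, Metric.ball_subset_ball (by exact_mod_cast hi) hxA.2⟩,
        fun h => hx (mem_iUnion_of_mem i h)⟩
    · obtain ⟨r, hr, H⟩ := exists_radius hΦ hD (hKc i) (hKu i) hε
      refine ⟨r, hr, fun z hz v w hv hw hzv hzw L hL => ?_⟩
      have hzU : z ∈ U := (hKA i hz).1
      rw [← hd _ hzv _ (hKA i hzw).1]
      exact H z hz v w hv hw hzw L ((hasMDDerivAt_iff hU hd hzU _ L).1 hL)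
end

section
/- Let X be a metric space and γ : (a,b) → X a Lipschitz curve. Then for almost every t ∈ (a,b) the limit lim_{r→0⁺} d(γ(t+r), γ(t))/r exists. -/
/-!
The metric derivative is identified with `m t = sup_n |f_n' t|`, where `f_n t = d(γ t, x_n)` and
`(x_n)` is a dense sequence in the image of `γ` (each `f_n` being replaced by a real-valued
Lipschitz extension `g_n` to all of `ℝ`, hence differentiable almost everywhere).

Since `|f_n (t + r) - f_n t| ≤ d(γ (t + r), γ t)`, the lower limit of the difference quotient is
at least `m t` wherever all `g_n` are differentiable. Conversely, choosing `x_n` close to `γ t`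
and integrating `g_n'` gives `d(γ s, γ t) ≤ ∫_t^s m` (`dist_le_integral_iSup_abs_deriv`), so the
upper limit is at most `m t` at every point where Lebesgue's differentiation theorem holds for the
bounded measurable function `m`.
-/

open MeasureTheory Set Filter Topology

section

variable {X : Type*} [MetricSpace X] {a b : ℝ} {γ : ℝ → X} {L : NNReal} {g : ℕ → ℝ → ℝ}

lemma abs_deriv_le (hg : ∀ n, LipschitzWith L (g n)) (n : ℕ) (t : ℝ) :
    |deriv (g n) t| ≤ L :=
  norm_deriv_le_of_lipschitz (hg n)

lemma bddAbove_abs_deriv (hg : ∀ n, LipschitzWith L (g n)) (t : ℝ) :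
    BddAbove (range fun n => |deriv (g n) t|) :=
  ⟨L, by rintro _ ⟨n, rfl⟩; exact abs_deriv_le hg n t⟩

lemma locallyIntegrable_iSup_abs_deriv (hg : ∀ n, LipschitzWith L (g n)) :
    LocallyIntegrable (fun t => ⨆ n, |deriv (g n) t|) volume := by
  have hmeas : Measurable fun t => ⨆ n, |deriv (g n) t| :=
    Measurable.iSup fun n => (measurable_deriv (g n)).norm
  refine (locallyIntegrable_const (L : ℝ)).mono hmeas.aestronglyMeasurable
    (Eventually.of_forall fun t => ?_)
  rw [Real.norm_of_nonneg (Real.iSup_nonneg fun n => abs_nonneg _),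
    Real.norm_of_nonneg L.coe_nonneg]
  exact ciSup_le fun n => abs_deriv_le hg n t

lemma intervalIntegrable_iSup_abs_deriv (hg : ∀ n, LipschitzWith L (g n)) (s t : ℝ) :
    IntervalIntegrable (fun t => ⨆ n, |deriv (g n) t|) volume s t :=
  intervalIntegrable_iff.mpr <|
    ((locallyIntegrable_iSup_abs_deriv hg).integrableOn_isCompact isCompact_uIcc).mono_set
      uIoc_subset_uIcc

lemma sub_le_integral_iSup_abs_deriv (hg : ∀ n, LipschitzWith L (g n)) (n : ℕ)
    {s t : ℝ} (hts : t ≤ s) :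
    g n s - g n t ≤ ∫ x in t..s, ⨆ k, |deriv (g k) x| := by
  have hac : AbsolutelyContinuousOnInterval (g n) t s :=
    (hg n).lipschitzOnWith.absolutelyContinuousOnInterval
  rw [← hac.integral_deriv_eq_sub]
  exact intervalIntegral.integral_mono hts hac.intervalIntegrable_deriv
    (intervalIntegrable_iSup_abs_deriv hg t s)
    fun x => (le_abs_self _).trans (le_ciSup (bddAbove_abs_deriv hg x) n)

/-- The upper bound: the supremum of the `|g n'|` is an upper gradient along `γ`, because the
distances to a dense sequence of points of `γ` recover the distance between any two of them. -/
lemma dist_le_integral_iSup_abs_deriv (hγ : LipschitzOnWith L γ (Ioo a b))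
    {u : ℕ → Ioo a b} (hu : DenseRange u) (hg : ∀ n, LipschitzWith L (g n))
    (hgγ : ∀ n, EqOn (fun t => dist (γ t) (γ (u n))) (g n) (Ioo a b))
    {s t : ℝ} (hs : s ∈ Ioo a b) (ht : t ∈ Ioo a b) (hts : t ≤ s) :
    dist (γ s) (γ t) ≤ ∫ x in t..s, ⨆ k, |deriv (g k) x| := by
  refine le_of_forall_pos_le_add fun ε hε => ?_
  have hopen : IsOpen {x : Ioo a b | dist (γ t) (γ x) < ε / 2} :=
    isOpen_lt (continuous_const.dist hγ.continuousOn.domRestrict) continuous_const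
  obtain ⟨n, hn⟩ := hu.exists_mem_open hopen ⟨⟨t, ht⟩, by simpa using half_pos hε⟩
  have hint := sub_le_integral_iSup_abs_deriv hg n hts
  rw [← hgγ n hs, ← hgγ n ht] at hint
  have htri := dist_triangle_right (γ s) (γ t) (γ (u n))
  simp only [mem_ofPred_eq] at hn hint
  linarith

end

theorem metric_deriv_exists_ae_one_dim {X : Type*} [MetricSpace X]
    (a b : ℝ) (γ : ℝ → X) (L : NNReal) (hγ : LipschitzOnWith L γ (Set.Ioo a b)) :
    ∀ᵐ t ∂(MeasureTheory.volume.restrict (Set.Ioo a b)),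
      ∃ l : ℝ, Filter.Tendsto (fun r : ℝ => dist (γ (t + r)) (γ t) / r)
        (nhdsWithin 0 (Set.Ioi 0)) (nhds l) := by
  rcases (Ioo a b).eq_empty_or_nonempty with hab | hab
  · simp [hab]
  have : Nonempty (Ioo a b) := hab.to_subtype
  obtain ⟨u, hu⟩ := TopologicalSpace.exists_dense_seq (Ioo a b)
  have hext : ∀ n, ∃ g : ℝ → ℝ, LipschitzWith L g ∧
      EqOn (fun t => dist (γ t) (γ (u n))) g (Ioo a b) := fun n =>
    LipschitzOnWith.extend_real <| by
      simpa [Function.comp_def] using (LipschitzWith.dist_left (γ (u n))).comp_lipschitzOnWith hγ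
  choose g hg hgγ using hext
  rw [ae_restrict_iff' measurableSet_Ioo]
  filter_upwards [ae_all_iff.2 fun n => (hg n).ae_differentiableAt_real,
    LocallyIntegrable.ae_hasDerivAt_integral (locallyIntegrable_iSup_abs_deriv hg)] with t hdiff hleb ht
  refine ⟨⨆ n, |deriv (g n) t|, ?_⟩
  have hmem : ∀ᶠ r : ℝ in 𝓝[>] 0, t + r ∈ Ioo a b := by
    have hcont : Tendsto (fun r : ℝ => t + r) (𝓝[>] 0) (𝓝 t) := by
      have h : Tendsto (fun r : ℝ => t + r) (𝓝 0) (𝓝 (t + 0)) :=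
        (continuous_const.add continuous_id).tendsto 0
      rw [add_zero] at h
      exact h.mono_left nhdsWithin_le_nhds
    exact hcont.eventually (isOpen_Ioo.mem_nhds ht)
  refine tendsto_order.2 ⟨fun l hl => ?_, fun l hl => ?_⟩
  · obtain ⟨n, hn⟩ := exists_lt_of_lt_ciSup hl
    have hlim := ((hdiff n).hasDerivAt.tendsto_slope_zero_right).abs
    filter_upwards [hlim.eventually (lt_mem_nhds hn), hmem, self_mem_nhdsWithin] with r hr hrm hr0
    have hr0 : 0 < r := hr0
    refine hr.trans_le ?_
    rw [smul_eq_mul, abs_mul, abs_inv, abs_of_pos hr0, ← hgγ n hrm, ← hgγ n ht, inv_mul_eq_div]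
    gcongr
    exact abs_dist_sub_le _ _ _
  · have hlim := (hleb t).tendsto_slope_zero_right
    filter_upwards [hlim.eventually (gt_mem_nhds hl), hmem, self_mem_nhdsWithin] with r hr hrm hr0
    have hr0 : 0 < r := hr0
    refine lt_of_le_of_lt ?_ hr
    rw [smul_eq_mul, intervalIntegral.integral_same, sub_zero, inv_mul_eq_div]
    gcongr
    exact dist_le_integral_iSup_abs_deriv hγ hu hg hgγ hrm ht (by linarith)
end

section
/- Let U ⊆ ℝᵏ be open, (X,d) a metric space, φ : U → X and ρ : X → ℝᵏ Lipschitz maps, and z ∈ U. If ρ∘φ is (Fréchet) differentiable at z, the metric directional derivative md φ_z(v) exists for every v ∈ ℝᵏ, and md φ_z is degenerate (i.e., md φ_z(v₀) = 0 for some v₀ ≠ 0), then det(D_z[ρ∘φ]) = 0, where D_z[ρ∘φ] is the derivative of ρ∘φ at z. -/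
theorem det_eq_zero_of_md_degenerate {X : Type*} [MetricSpace X] (k : ℕ)
    (U : Set (EuclideanSpace ℝ (Fin k))) (hU : IsOpen U)
    (φ : EuclideanSpace ℝ (Fin k) → X) (ρ : X → EuclideanSpace ℝ (Fin k))
    (Kφ Kρ : NNReal) (hφ : LipschitzOnWith Kφ φ U) (hρ : LipschitzWith Kρ ρ)
    (z : EuclideanSpace ℝ (Fin k)) (hz : z ∈ U)
    (hdiff : DifferentiableAt ℝ (ρ ∘ φ) z)
    (hmd : ∀ v, ∃ L, HasMDDerivAt φ z v L)
    (hdeg : ∃ v ≠ 0, HasMDDerivAt φ z v 0) :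
    LinearMap.det ((fderiv ℝ (ρ ∘ φ) z) :
      EuclideanSpace ℝ (Fin k) →ₗ[ℝ] EuclideanSpace ℝ (Fin k)) = 0 := by
  obtain ⟨v, hv, h0⟩ := hdeg
  have hslope : Filter.Tendsto (fun r : ℝ => r⁻¹ • ((ρ ∘ φ) (z + r • v) - (ρ ∘ φ) z))
      (nhdsWithin 0 (Set.Ioi 0)) (nhds (fderiv ℝ (ρ ∘ φ) z v)) :=
    (hdiff.hasFDerivAt.hasLineDerivAt v).tendsto_slope_zero_right
  have hzero : Filter.Tendsto (fun r : ℝ => r⁻¹ • ((ρ ∘ φ) (z + r • v) - (ρ ∘ φ) z))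
      (nhdsWithin 0 (Set.Ioi 0)) (nhds 0) := by
    refine squeeze_zero_norm' ?_ (by simpa using Filter.Tendsto.const_mul (Kρ : ℝ) h0)
    filter_upwards [self_mem_nhdsWithin] with r hr
    have hr' : (0 : ℝ) < r := hr
    rw [norm_smul, norm_inv, Real.norm_of_nonneg hr'.le, ← dist_eq_norm, inv_mul_eq_div,
      ← mul_div_assoc]
    gcongr
    exact hρ.dist_le_mul _ _
  have hker : fderiv ℝ (ρ ∘ φ) z v = 0 := tendsto_nhds_unique hslope hzero
  by_contra hdet
  exact hv (((LinearMap.equivOfDetNeZero _ hdet).map_eq_zero_iff).1 hker)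
end

section
/- Let ‖·‖ be a norm on ℝ² with closed unit ball B̂(0,1), let r₁ > 0 be the maximal radius such that the Euclidean closed ball B(0,r₁) is contained in B̂(0,1), let v₀ be a point lying on both the Euclidean sphere of radius r₁ about 0 and the ‖·‖-unit sphere, and set y := 2v₀. Then (1/h)·diam_{‖·‖}[B̂(0, 1+h) ∩ B̂(y, 1+h)] → ∞ as h → 0⁺, where B̂(x,r) denotes the closed ‖·‖-ball of radius r about x and diam_{‖·‖} the diameter with respect to ‖·‖. -/
/-!
The inclusion `B(0, r₁) ⊆ B̂(0, 1)` says that `r₁ * N w ≤ ‖w‖` for all `w`. Let `u` be `v₀` rotated by a right angle. By Pythagoras the points `v₀ ± √h • u` and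
their translates by `-2 • v₀` have Euclidean norm `r₁ * √(1 + h) ≤ r₁ * (1 + h)`, so they lie in the
intersection of the two balls of radius `1 + h`. Their distance is `2 * √h * N u`, so the ratio is
at least `2 * N u / √h`, which tends to infinity since `N u > 0`.
-/

/-- The unit ball of `N` containing the Euclidean ball of radius `r₁` amounts to a comparison of
`N` with the Euclidean norm. -/
theorem mul_le_norm_of_closedBall_subset {E : Type*} [NormedAddCommGroup E] [NormedSpace ℝ E]
    (N : E → ℝ) (hNsmul : ∀ (s : ℝ) (v), N (s • v) = |s| * N v) (r₁ : ℝ) (hr₁ : 0 < r₁)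
    (hsub : Metric.closedBall (0 : E) r₁ ⊆ {w | N w ≤ 1}) (w : E) : r₁ * N w ≤ ‖w‖ := by
  rcases eq_or_ne w 0 with rfl | hw
  · have h0 := hNsmul 0 0
    simp only [smul_zero, abs_zero, zero_mul] at h0
    simp [h0]
  · have hpos : 0 < ‖w‖ := norm_pos_iff.mpr hw
    have hmem : (r₁ / ‖w‖) • w ∈ Metric.closedBall (0 : E) r₁ := by
      rw [mem_closedBall_zero_iff, norm_smul, Real.norm_eq_abs, abs_of_pos (div_pos hr₁ hpos),
        div_mul_cancel₀ _ hpos.ne']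
    have h1 : N ((r₁ / ‖w‖) • w) ≤ 1 := hsub hmem
    rw [hNsmul, abs_of_pos (div_pos hr₁ hpos), div_mul_eq_mul_div, div_le_one hpos] at h1
    exact h1

theorem diam_ratio_tendsto_atTop_of_norm (N : EuclideanSpace ℝ (Fin 2) → ℝ)
    (hN0 : ∀ v, N v = 0 ↔ v = 0)
    (hNsmul : ∀ (s : ℝ) (v), N (s • v) = |s| * N v)
    (hNadd : ∀ v w, N (v + w) ≤ N v + N w)
    (r₁ : ℝ) (hr₁ : 0 < r₁)
    (hmax : IsGreatest {r : ℝ |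
      Metric.closedBall (0 : EuclideanSpace ℝ (Fin 2)) r ⊆ {w | N w ≤ 1}} r₁)
    (v₀ : EuclideanSpace ℝ (Fin 2)) (hv₀ : ‖v₀‖ = r₁) (hNv₀ : N v₀ = 1) :
    Filter.Tendsto
      (fun h : ℝ => (1 / h) *
        sSup {d : ℝ | ∃ a b : EuclideanSpace ℝ (Fin 2),
          N a ≤ 1 + h ∧ N (a - (2:ℝ) • v₀) ≤ 1 + h ∧
          N b ≤ 1 + h ∧ N (b - (2:ℝ) • v₀) ≤ 1 + h ∧ d = N (a - b)})
      (nhdsWithin 0 (Set.Ioi 0)) Filter.atTop := by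
  have hle := mul_le_norm_of_closedBall_subset N hNsmul r₁ hr₁ hmax.1
  set u : EuclideanSpace ℝ (Fin 2) := !₂[-v₀ 1, v₀ 0] with hu
  have hv2 : v₀ 0 ^ 2 + v₀ 1 ^ 2 = r₁ ^ 2 := by
    rw [← hv₀, EuclideanSpace.norm_sq_eq]
    simp [Fin.sum_univ_two]
  have hu0 : u ≠ 0 := by
    intro h
    have e0 := congrArg (fun x : EuclideanSpace ℝ (Fin 2) => x 0) h
    have e1 := congrArg (fun x : EuclideanSpace ℝ (Fin 2) => x 1) h
    simp [hu] at e0 e1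
    rw [e0, e1] at hv2
    nlinarith
  have hnneg : ∀ w, N (-w) = N w := fun w => by simpa using hNsmul (-1) w
  have hNu : 0 < N u := by
    have h1 := hNadd u (-u)
    rw [add_neg_cancel, hnneg, (hN0 0).mpr rfl] at h1
    exact lt_of_le_of_ne (by linarith) fun h => hu0 ((hN0 u).mp h.symm)
  have key : ∀ h : ℝ, 0 < h → ∀ s t : ℝ, s ^ 2 = 1 → t ^ 2 = h → N (s • v₀ + t • u) ≤ 1 + h := by
    intro h hh s t hs ht
    have hn : ‖s • v₀ + t • u‖ ≤ r₁ * (1 + h) := by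
      refine abs_le_of_sq_le_sq' ?_ (by positivity) |>.2
      have hsq : ‖s • v₀ + t • u‖ ^ 2 = (s ^ 2 + t ^ 2) * (v₀ 0 ^ 2 + v₀ 1 ^ 2) := by
        rw [EuclideanSpace.norm_sq_eq]
        simp [Fin.sum_univ_two, hu]
        ring
      rw [hsq, hs, ht, hv2]
      nlinarith [mul_pos (pow_pos hr₁ 2) hh, mul_pos (pow_pos hr₁ 2) (pow_pos hh 2)]
    exact le_of_mul_le_mul_left ((hle _).trans hn) hr₁
  have hlim : Filter.Tendsto (fun h : ℝ => 2 * N u * (√h)⁻¹) (nhdsWithin 0 (Set.Ioi 0))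
      Filter.atTop := by
    refine Filter.Tendsto.const_mul_atTop (by positivity) (Filter.Tendsto.inv_tendsto_nhdsGT_zero ?_)
    refine tendsto_nhdsWithin_iff.mpr ⟨?_, ?_⟩
    · have := (Real.continuous_sqrt.tendsto 0).mono_left (nhdsWithin_le_nhds (s := Set.Ioi 0))
      simpa using this
    · filter_upwards [self_mem_nhdsWithin] with h hh
      exact Real.sqrt_pos.mpr hh
  refine Filter.tendsto_atTop_mono' _ ?_ hlim
  filter_upwards [self_mem_nhdsWithin] with h hh
  have hh : 0 < h := hh
  have hs : 0 < √h := Real.sqrt_pos.mpr hh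
  have hss : √h ^ 2 = h := Real.sq_sqrt hh.le
  have hsup : 2 * √h * N u ≤ sSup {d : ℝ | ∃ a b : EuclideanSpace ℝ (Fin 2),
          N a ≤ 1 + h ∧ N (a - (2:ℝ) • v₀) ≤ 1 + h ∧
          N b ≤ 1 + h ∧ N (b - (2:ℝ) • v₀) ≤ 1 + h ∧ d = N (a - b)} := by
    apply le_csSup
    · -- Boundedness matters: `sSup` of an unbounded set of reals is `0`.
      refine ⟨2 * (1 + h), ?_⟩
      rintro d ⟨a, b, ha, -, hb, -, rfl⟩
      have h1 := hNadd a (-b)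
      rw [hnneg, ← sub_eq_add_neg] at h1
      linarith
    · refine ⟨(1 : ℝ) • v₀ + √h • u, (1 : ℝ) • v₀ + (-√h) • u,
        key h hh _ _ (by norm_num) hss, ?_, key h hh _ _ (by norm_num) (by rw [neg_sq, hss]),
        ?_, ?_⟩
      · convert key h hh (-1) (√h) (by norm_num) hss using 2
        module
      · convert key h hh (-1) (-√h) (by norm_num) (by rw [neg_sq, hss]) using 2
        module
      · have e : ((1 : ℝ) • v₀ + √h • u) - ((1 : ℝ) • v₀ + (-√h) • u) = (2 * √h) • u := by
          module
        rw [e, hNsmul, abs_of_pos (by positivity)]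
  calc 2 * N u * (√h)⁻¹ = 1 / h * (2 * √h * N u) := by
        field_simp
        rw [hss]
    _ ≤ _ := mul_le_mul_of_nonneg_left hsup (by positivity)
end

section
/- Let r > 0, h > 0, and let x, y ∈ ℝ² be points with Euclidean distance |x − y| = 2r. Then the Euclidean diameter of the intersection of the two closed Euclidean balls of radius r(1+h) centered at x and at y equals 2√(2h + h²)·r. -/
/-!
Let `m` be the midpoint of `x` and `y`. By the median identity
`|w - m|² = (|w - x|² + |w - y|²) / 2 - r²`, every point of the lens lies within
`r √((1 + h)² - 1) = r √(2h + h²)` of `m`, which bounds the diameter from above. The two corners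
of the lens, `m ± (√(2h + h²) / 2) • J (x - y)` with `J` the rotation by a right angle, lie on
both bounding circles and are at distance `2 √(2h + h²) r` from each other.
-/

theorem dist_sq_coords (a b : EuclideanSpace ℝ (Fin 2)) :
    dist a b ^ 2 = (a 0 - b 0) ^ 2 + (a 1 - b 1) ^ 2 := by
  rw [EuclideanSpace.dist_eq, Real.sq_sqrt (by positivity)]
  simp [Fin.sum_univ_two, Real.dist_eq, sq_abs]

theorem diam_lens_eq (r h : ℝ) (hr : 0 < r) (hh : 0 < h)
    (x y : EuclideanSpace ℝ (Fin 2)) (hxy : dist x y = 2 * r) :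
    Metric.diam (Metric.closedBall x (r * (1 + h)) ∩ Metric.closedBall y (r * (1 + h)))
      = 2 * Real.sqrt (2 * h + h ^ 2) * r := by
  have hS : Real.sqrt (2 * h + h ^ 2) ^ 2 = 2 * h + h ^ 2 := Real.sq_sqrt (by positivity)
  have hS0 : 0 ≤ Real.sqrt (2 * h + h ^ 2) := Real.sqrt_nonneg _
  set S := Real.sqrt (2 * h + h ^ 2)
  have hd : (x 0 - y 0) ^ 2 + (x 1 - y 1) ^ 2 = 4 * r ^ 2 := by
    rw [← dist_sq_coords, hxy]; ring
  have hR : 0 ≤ r * (1 + h) := by positivity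
  apply le_antisymm
  · have hsub : Metric.closedBall x (r * (1 + h)) ∩ Metric.closedBall y (r * (1 + h)) ⊆
        Metric.closedBall (!₂[(x 0 + y 0) / 2, (x 1 + y 1) / 2] : EuclideanSpace ℝ (Fin 2))
          (S * r) := by
      rintro w ⟨hwx, hwy⟩
      rw [Metric.mem_closedBall] at *
      have h1 := pow_le_pow_left₀ dist_nonneg hwx 2
      have h2 := pow_le_pow_left₀ dist_nonneg hwy 2
      rw [dist_sq_coords] at h1 h2
      apply le_of_sq_le_sq _ (by positivity)
      rw [dist_sq_coords, mul_pow, hS]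
      simp
      linarith
    calc _ ≤ Metric.diam (Metric.closedBall
            (!₂[(x 0 + y 0) / 2, (x 1 + y 1) / 2] : EuclideanSpace ℝ (Fin 2)) (S * r)) :=
          Metric.diam_mono hsub Metric.isBounded_closedBall
      _ ≤ 2 * (S * r) := Metric.diam_closedBall (by positivity)
      _ = 2 * S * r := by ring
  · -- The corner `m + (s / 2) • J (x - y)` is on both circles whenever `s² = 2h + h²`.
    have hmem : ∀ s : ℝ, s ^ 2 = 2 * h + h ^ 2 →
        (!₂[(x 0 + y 0) / 2 - s / 2 * (x 1 - y 1), (x 1 + y 1) / 2 + s / 2 * (x 0 - y 0)] :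
          EuclideanSpace ℝ (Fin 2)) ∈
        Metric.closedBall x (r * (1 + h)) ∩ Metric.closedBall y (r * (1 + h)) := by
      intro s hs
      constructor <;>
      · rw [Metric.mem_closedBall]
        apply le_of_sq_le_sq _ hR
        rw [dist_sq_coords]
        simp
        linear_combination (1 + s ^ 2) / 4 * hd + r ^ 2 * hs
    have key := Metric.dist_le_diam_of_mem
      (Metric.isBounded_closedBall.subset Set.inter_subset_left) (hmem S hS)
      (hmem (-S) (by rw [neg_sq, hS]))
    refine le_trans ?_ key
    apply le_of_sq_le_sq _ dist_nonneg
    rw [dist_sq_coords]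
    simp
    linear_combination -S ^ 2 * hd
end
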